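/- arXiv:2006.06631 — 9 statements merged into one kernel-verified Lean document; each statement's English description precedes it below -/
import Mathlib

section
/- Let L₁, …, L₁₀ be ten pairwise distinct complex lines in ℂ² such that every pair L_i, L_j (i ≠ j) has nonempty intersection, and suppose there exist points a, b, c, A, B, C, p, q, r ∈ ℂ² with a ∈ L₁ ∩ L₃ ∩ L₄, b ∈ L₁ ∩ L₅ ∩ L₆, c ∈ L₁ ∩ L₇ ∩ L₈, A ∈ L₂ ∩ L₅ ∩ L₇, B ∈ L₂ ∩ L₃ ∩ L₈, C ∈ L₂ ∩ L₄ ∩ L₆ ∩ L₉, p ∈ L₃ ∩ L₅ ∩ L₁₀, q ∈ L₄ ∩ L₇ ∩ L₁₀, and r ∈ L₈ ∩ L₉ ∩ L₁₀. Then all ten lines are concurrent, i.e., there is a single point lying on every L_i. (This says the modified Pappus pseudoline arrangement 𝒫 is 'unexpected': the only complex line arrangements satisfying all its incidence relations are pencils.) -/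
/-!
A point lying on two lines of a marked point is that marked point, hence lies on all lines through
it. If three lines such as `L 0`, `L 2`, `L 4` had a common point, repeating this would put that
point on all ten lines; so unless the arrangement is a pencil it is nondegenerate enough for the
Pappus configuration on `a, b, c` and `A, B, C` to be a genuine one. Pappus's theorem then puts `r`,
the intersection of `cB` with the line `pq`, on the line `bC` as well. Thus `C` and `r` both lie on
`L 5` and on `L 8`, so `C = r`, which is again excluded by the degeneracy argument.
-/

/-- A complex affine line in `ℂ²`: a complex affine subspace of complex dimension 1,
i.e. a set of the form `{p + t • d : t ∈ ℂ}` with `d ≠ 0`. -/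
def IsComplexLine (L : Set (ℂ × ℂ)) : Prop :=
  ∃ p d : ℂ × ℂ, d ≠ 0 ∧ L = {q | ∃ t : ℂ, q = p + t • d}

open Module

namespace IsComplexLine

theorem exists_affineSubspace {L : Set (ℂ × ℂ)} (hL : IsComplexLine L) :
    ∃ s : AffineSubspace ℂ (ℂ × ℂ), finrank ℂ s.direction = 1 ∧ (s : Set (ℂ × ℂ)) = L := by
  obtain ⟨p, d, hd, rfl⟩ := hL
  refine ⟨.mk' p (ℂ ∙ d), ?_, ?_⟩
  · rw [AffineSubspace.direction_mk', finrank_span_singleton hd]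
  · ext q
    simp only [SetLike.mem_coe, AffineSubspace.mem_mk', Submodule.mem_span_singleton,
      Set.mem_ofPred_eq, vsub_eq_sub, eq_sub_iff_add_eq', eq_comm]

end IsComplexLine

section Concurrence

variable {ι α : Type*} [DecidableEq ι]

/-- One round of forced concurrences. If the members of `M` index concurrent lines, then a point on
all lines of `S` lies on every line of each `m ∈ M` that shares two lines with `S`; this is `S`
enlarged by all such `m`. -/
def concurrenceStep (M : Finset (Finset ι)) (S : Finset ι) : Finset ι :=
  S ∪ {m ∈ M | 1 < (m ∩ S).card}.biUnion id

variable {L : ι → Set α} {M : Finset (Finset ι)} {S : Finset ι} {z : α}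

theorem mem_of_mem_concurrenceStep (hL : Pairwise fun i j => (L i ∩ L j).Subsingleton)
    (hM : ∀ m ∈ M, ∃ x, ∀ i ∈ m, x ∈ L i) (hz : ∀ i ∈ S, z ∈ L i) :
    ∀ i ∈ concurrenceStep M S, z ∈ L i := by
  intro i hi
  simp only [concurrenceStep, Finset.mem_union, Finset.mem_biUnion, Finset.mem_filter, id] at hi
  obtain hi | ⟨m, ⟨hm, hcard⟩, hi⟩ := hi
  · exact hz i hi
  · obtain ⟨x, hx⟩ := hM m hm
    obtain ⟨j, hj, k, hk, hjk⟩ := Finset.one_lt_card.mp hcard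
    rw [Finset.mem_inter] at hj hk
    have hzx : z = x := hL hjk ⟨hz j hj.2, hz k hk.2⟩ ⟨hx j hj.1, hx k hk.1⟩
    exact hzx ▸ hx i hi

theorem mem_of_mem_iterate_concurrenceStep (hL : Pairwise fun i j => (L i ∩ L j).Subsingleton)
    (hM : ∀ m ∈ M, ∃ x, ∀ i ∈ m, x ∈ L i) (hz : ∀ i ∈ S, z ∈ L i) (n : ℕ) :
    ∀ i ∈ (concurrenceStep M)^[n] S, z ∈ L i := by
  induction n with
  | zero => exact hz
  | succ n ih =>
    rw [Function.iterate_succ_apply']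
    exact mem_of_mem_concurrenceStep hL hM ih

end Concurrence

section Lines

variable {K V P : Type*} [DivisionRing K] [AddCommGroup V] [Module K V] [AddTorsor V P]

theorem mem_affineSpan_pair_iff_vsub (o : P) {x y z : P} :
    z ∈ line[K, x, y] ↔ ∃ t : K, (1 - t) • (x -ᵥ o) + t • (y -ᵥ o) = z -ᵥ o := by
  simp_rw [mem_affineSpan_pair_iff_exists_lineMap_eq, ← vsub_left_cancel_iff (p := o),
    AffineMap.lineMap_vsub, AffineMap.lineMap_apply_module]

theorem linearIndependent_vsub_pair {a b c : P} (hab : a ≠ b) (hc : c ∉ line[K, a, b]) :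
    LinearIndependent K ![b -ᵥ a, c -ᵥ a] := by
  refine (LinearIndependent.pair_iff' (vsub_ne_zero.mpr hab.symm)).mpr fun t ht => hc ?_
  exact (mem_affineSpan_pair_iff_vsub a).mpr ⟨t, by rw [vsub_self, smul_zero, zero_add, ht]⟩

theorem affineSpan_pair_eq_of_finrank_direction_eq_one {s : AffineSubspace K P}
    (hs : finrank K s.direction = 1) {x y : P} (hx : x ∈ s) (hy : y ∈ s) (hxy : x ≠ y) :
    line[K, x, y] = s := by
  have : FiniteDimensional K s.direction := .of_finrank_pos (by omega)
  have hle : line[K, x, y] ≤ s := affineSpan_pair_le_of_mem_of_mem hx hy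
  refine AffineSubspace.eq_of_direction_eq_of_nonempty_of_le
    (Submodule.eq_of_le_of_finrank_eq (AffineSubspace.direction_le hle) ?_)
    ⟨x, left_mem_affineSpan_pair K x y⟩ hle
  rw [hs, direction_affineSpan, vectorSpan_pair, finrank_span_singleton (vsub_ne_zero.mpr hxy)]

theorem mem_affineSpan_pair_of_finrank_direction_eq_one {s : AffineSubspace K P}
    (hs : finrank K s.direction = 1) {x y z : P} (hx : x ∈ s) (hy : y ∈ s) (hz : z ∈ s)
    (hxy : x ≠ y) : z ∈ line[K, x, y] :=
  (affineSpan_pair_eq_of_finrank_direction_eq_one hs hx hy hxy).symm ▸ hz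

theorem inter_subsingleton_of_finrank_direction_eq_one {s t : AffineSubspace K P}
    (hs : finrank K s.direction = 1) (ht : finrank K t.direction = 1) (hst : s ≠ t) :
    (s ∩ t : Set P).Subsingleton := by
  intro x hx y hy
  by_contra hxy
  exact hst <| (affineSpan_pair_eq_of_finrank_direction_eq_one hs hx.1 hy.1 hxy).symm.trans
    (affineSpan_pair_eq_of_finrank_direction_eq_one ht hx.2 hy.2 hxy)

end Lines

section Pappus

/-- In the affine frame `a = (0, 0)`, `b = (1, 0)`, `B = (0, 1)`, the remaining points of Pappus's
configuration are `c = (c, 0)`, `p = (0, s)`, `A = (1 - μ, μ * s)`, `C = (x, y)`, `q = e • C` and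
`r = ((1 - m) * c, m)`. The equations of the lines `bC` and `cB` turn out to be proportional at `p`
and `q`, so they have the same zeros on the line `pq`. -/
theorem pappus_coordinates {R : Type*} [CommRing R] [NoZeroDivisors R] {c s μ δ x y e f m w : R}
    (hc : c ≠ 0) (hs : s ≠ 1)
    (hx : x = δ * (1 - μ)) (hy : y = 1 - δ + δ * (μ * s))
    (hq₁ : e * x = (1 - f) * c + f * (1 - μ)) (hq₂ : e * y = f * (μ * s))
    (hr₁ : (1 - m) * c = w * (e * x)) (hr₂ : m = (1 - w) * s + w * (e * y)) :
    y * ((1 - m) * c - 1) + (1 - x) * m = 0 := by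
  let bC (X Y : R) : R := y * (X - 1) + (1 - x) * Y
  let cB (X Y : R) : R := X + c * Y - c
  have hbCp : bC 0 s = (s - 1) * (1 - δ) := by linear_combination -s * hx - hy
  have hcBp : cB 0 s = c * (s - 1) := by ring
  have hbCq : bC (e * x) (e * y) = -(1 - e) * y := by ring
  have hcBq : (1 - δ) * cB (e * x) (e * y) = -c * (1 - e) * y := by
    linear_combination (c - e * x) * hy + (x - c * δ) * hq₂ + f * μ * s * hx - δ * μ * s * hq₁
  have hpq : bC 0 s * cB (e * x) (e * y) = bC (e * x) (e * y) * cB 0 s := by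
    rw [hbCp, hcBp, hbCq]
    linear_combination (s - 1) * hcBq
  have hbCr : bC ((1 - m) * c) m = (1 - w) * bC 0 s + w * bC (e * x) (e * y) := by
    linear_combination y * hr₁ + (1 - x) * hr₂
  have hcBr : (1 - w) * cB 0 s + w * cB (e * x) (e * y) = 0 := by
    linear_combination -hr₁ - c * hr₂
  have hcBp_ne : cB 0 s ≠ 0 := hcBp ▸ mul_ne_zero hc (sub_ne_zero.mpr hs)
  suffices bC ((1 - m) * c) m * cB 0 s = 0 from (mul_eq_zero.mp this).resolve_right hcBp_ne
  calc bC ((1 - m) * c) m * cB 0 s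
      = bC 0 s * ((1 - w) * cB 0 s + w * cB (e * x) (e * y)) := by
        rw [hbCr]
        linear_combination -w * hpq
    _ = 0 := by rw [hcBr, mul_zero]

variable {K V P : Type*} [Field K] [AddCommGroup V] [Module K V] [AddTorsor V P]

theorem mem_affineSpan_pair_of_pappus {a b c A B C p q r : P}
    (hab : a ≠ b) (hB : B ∉ line[K, a, b]) (hC : C ∉ line[K, a, b]) (hca : c ≠ a) (hpB : p ≠ B)
    (hc : c ∈ line[K, a, b]) (hp : p ∈ line[K, a, B]) (hA : A ∈ line[K, b, p])
    (hCAB : C ∈ line[K, B, A]) (hqC : q ∈ line[K, a, C]) (hqA : q ∈ line[K, c, A])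
    (hrB : r ∈ line[K, c, B]) (hrpq : r ∈ line[K, p, q]) :
    r ∈ line[K, b, C] := by
  have hind : LinearIndependent K ![b -ᵥ a, B -ᵥ a] := linearIndependent_vsub_pair hab hB
  simp only [mem_affineSpan_pair_iff_vsub a, vsub_self, smul_zero, zero_add] at *
  obtain ⟨γ, hγ⟩ := hc
  obtain ⟨s, hs⟩ := hp
  obtain ⟨μ, hμ⟩ := hA
  obtain ⟨δ, hδ⟩ := hCAB
  obtain ⟨e, he⟩ := hqC
  obtain ⟨f, hf⟩ := hqA
  obtain ⟨m, hm⟩ := hrB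
  obtain ⟨w, hw⟩ := hrpq
  have hγ0 : γ ≠ 0 := by
    rintro rfl
    exact hca (vsub_eq_zero_iff_eq.mp (by rw [← hγ, zero_smul]))
  have hs1 : s ≠ 1 := by
    rintro rfl
    exact hpB (vsub_left_cancel (p := a) (by rw [← hs, one_smul]))
  obtain ⟨x, hx⟩ : ∃ x, x = δ * (1 - μ) := ⟨_, rfl⟩
  obtain ⟨y, hy⟩ : ∃ y, y = 1 - δ + δ * (μ * s) := ⟨_, rfl⟩
  have hCxy : C -ᵥ a = x • (b -ᵥ a) + y • (B -ᵥ a) := by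
    rw [← hδ, ← hμ, ← hs, hx, hy]
    module
  have hy0 : y ≠ 0 := by
    rintro rfl
    exact hC ⟨x, by rw [hCxy, zero_smul, add_zero]⟩
  rw [← hμ, ← hγ, ← hs] at hf
  rw [← hγ] at hm
  rw [← hs] at hw
  rw [hCxy] at he
  obtain ⟨hq₁, hq₂⟩ : e * x = (1 - f) * γ + f * (1 - μ) ∧ e * y = f * (μ * s) :=
    hind.eq_of_pair (by linear_combination (norm := module) he - hf)
  obtain ⟨hr₁, hr₂⟩ : (1 - m) * γ = w * (e * x) ∧ m = (1 - w) * s + w * (e * y) :=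
    hind.eq_of_pair (by linear_combination (norm := module) hm - hw - w • he)
  have hbCr := pappus_coordinates hγ0 hs1 hx hy hq₁ hq₂ hr₁ hr₂
  have hr₁' : 1 - m / y + m / y * x = (1 - m) * γ := by
    field_simp
    linear_combination -hbCr
  have hr₂' : m / y * y = m := div_mul_cancel₀ m hy0
  refine ⟨m / y, ?_⟩
  rw [← hm, hCxy]
  linear_combination (norm := module) hr₁' • (b -ᵥ a) + hr₂' • (B -ᵥ a)

end Pappus

section ModifiedPappus

variable {K V P : Type*} [Field K] [AddCommGroup V] [Module K V] [AddTorsor V P]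

/-- The incidences of the modified Pappus arrangement `𝒫` in an arbitrary affine space, with the
lines and marked points labelled as in `unexpected_pappus_arrangement`. -/
structure ModifiedPappusIncidence (L : Fin 10 → AffineSubspace K P) (a b c A B C p q r : P) :
    Prop where
  mem_a : a ∈ L 0 ⊓ L 2 ⊓ L 3
  mem_b : b ∈ L 0 ⊓ L 4 ⊓ L 5
  mem_c : c ∈ L 0 ⊓ L 6 ⊓ L 7
  mem_A : A ∈ L 1 ⊓ L 4 ⊓ L 6
  mem_B : B ∈ L 1 ⊓ L 2 ⊓ L 7
  mem_C : C ∈ L 1 ⊓ L 3 ⊓ L 5 ⊓ L 8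
  mem_p : p ∈ L 2 ⊓ L 4 ⊓ L 9
  mem_q : q ∈ L 3 ⊓ L 6 ⊓ L 9
  mem_r : r ∈ L 7 ⊓ L 8 ⊓ L 9

/-- The marked points of the modified Pappus arrangement `𝒫`, each encoded as the set of indices of
the lines through it in `ModifiedPappusIncidence`. -/
def modifiedPappusPoints : Finset (Finset (Fin 10)) :=
  {{0, 2, 3}, {0, 4, 5}, {0, 6, 7}, {1, 4, 6}, {1, 2, 7}, {1, 3, 5, 8}, {2, 4, 9}, {3, 6, 9},
    {7, 8, 9}}

namespace ModifiedPappusIncidence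

variable {L : Fin 10 → AffineSubspace K P} {a b c A B C p q r : P}

theorem exists_forall_mem (h : ModifiedPappusIncidence L a b c A B C p q r) :
    ∀ m ∈ modifiedPappusPoints, ∃ x, ∀ i ∈ m, x ∈ L i := by
  obtain ⟨ha, hb, hc, hA, hB, hC, hp, hq, hr⟩ := h
  simp only [AffineSubspace.mem_inf_iff, and_assoc] at ha hb hc hA hB hC hp hq hr
  simp only [modifiedPappusPoints, Finset.forall_mem_insert, Finset.mem_singleton, forall_eq]
  exact ⟨⟨a, ha⟩, ⟨b, hb⟩, ⟨c, hc⟩, ⟨A, hA⟩, ⟨B, hB⟩, ⟨C, hC⟩, ⟨p, hp⟩, ⟨q, hq⟩, ⟨r, hr⟩⟩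

theorem iterate_concurrenceStep_ne_univ (h : ModifiedPappusIncidence L a b c A B C p q r)
    (hinter : Pairwise fun i j => (L i ∩ L j : Set P).Subsingleton)
    (hpencil : ¬∃ z, ∀ i, z ∈ L i) {z : P} {i j k : Fin 10}
    (hi : z ∈ L i) (hj : z ∈ L j) (hk : z ∈ L k) (n : ℕ) :
    (concurrenceStep modifiedPappusPoints)^[n] {i, j, k} ≠ Finset.univ := by
  intro huniv
  have hz : ∀ l ∈ ({i, j, k} : Finset (Fin 10)), z ∈ (L l : Set P) := by simp [hi, hj, hk]
  have hmem := mem_of_mem_iterate_concurrenceStep hinter h.exists_forall_mem hz n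
  exact hpencil ⟨z, fun l => hmem l (huniv ▸ Finset.mem_univ l)⟩

theorem r_mem_five (h : ModifiedPappusIncidence L a b c A B C p q r)
    (hline : ∀ i, finrank K (L i).direction = 1)
    (hinter : Pairwise fun i j => (L i ∩ L j : Set P).Subsingleton)
    (hpencil : ¬∃ z, ∀ i, z ∈ L i) : r ∈ L 5 := by
  -- Five rounds of `concurrenceStep` reach all ten lines from each of the triples below.
  have generic {z : P} {i j k : Fin 10} (hi : z ∈ L i) (hj : z ∈ L j) (hk : z ∈ L k) :=
    h.iterate_concurrenceStep_ne_univ hinter hpencil hi hj hk 5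
  have on_line {i : Fin 10} {x y z : P} (hx : x ∈ L i) (hy : y ∈ L i) (hz : z ∈ L i)
      (hxy : x ≠ y) : z ∈ line[K, x, y] :=
    mem_affineSpan_pair_of_finrank_direction_eq_one (hline i) hx hy hz hxy
  obtain ⟨⟨⟨ha0, ha2⟩, ha3⟩, ⟨⟨hb0, hb4⟩, hb5⟩, ⟨⟨hc0, hc6⟩, hc7⟩, ⟨⟨hA1, hA4⟩, hA6⟩,
    ⟨⟨hB1, hB2⟩, hB7⟩, ⟨⟨⟨hC1, hC3⟩, hC5⟩, -⟩, ⟨⟨hp2, hp4⟩, hp9⟩, ⟨⟨hq3, hq6⟩, hq9⟩,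
    ⟨⟨hr7, -⟩, hr9⟩⟩ := h
  have hab : a ≠ b := by rintro rfl; exact generic ha0 ha2 hb4 (by decide)
  have hca : c ≠ a := by rintro rfl; exact generic ha0 ha2 hc6 (by decide)
  have hpB : p ≠ B := by rintro rfl; exact generic hB1 hB2 hp4 (by decide)
  have hbp : b ≠ p := by rintro rfl; exact generic hb0 hp2 hb4 (by decide)
  have hBA : B ≠ A := by rintro rfl; exact generic hB1 hB2 hA4 (by decide)
  have hcA : c ≠ A := by rintro rfl; exact generic hc0 hA1 hc6 (by decide)
  have hpq : p ≠ q := by rintro rfl; exact generic hp2 hq3 hp4 (by decide)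
  have hB0 : B ∉ L 0 := fun hB0 => generic hB0 hB1 hB2 (by decide)
  have hC0 : C ∉ L 0 := fun hC0 => generic hC0 hC1 hC3 (by decide)
  have hab_le : line[K, a, b] ≤ L 0 := affineSpan_pair_le_of_mem_of_mem ha0 hb0
  have hrbC : r ∈ line[K, b, C] :=
    mem_affineSpan_pair_of_pappus hab (fun hB => hB0 (hab_le hB)) (fun hC => hC0 (hab_le hC))
      hca hpB (on_line ha0 hb0 hc0 hab) (on_line ha2 hB2 hp2 (ne_of_mem_of_not_mem ha0 hB0))
      (on_line hb4 hp4 hA4 hbp) (on_line hB1 hA1 hC1 hBA)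
      (on_line ha3 hC3 hq3 (ne_of_mem_of_not_mem ha0 hC0)) (on_line hc6 hA6 hq6 hcA)
      (on_line hc7 hB7 hr7 (ne_of_mem_of_not_mem hc0 hB0)) (on_line hp9 hq9 hr9 hpq)
  exact affineSpan_pair_le_of_mem_of_mem hb5 hC5 hrbC

end ModifiedPappusIncidence

theorem unexpected_pappus_arrangement_general {L : Fin 10 → AffineSubspace K P}
    (hline : ∀ i, finrank K (L i).direction = 1) (hdistinct : Function.Injective L)
    {a b c A B C p q r : P} (h : ModifiedPappusIncidence L a b c A B C p q r) :
    ∃ z, ∀ i, z ∈ L i := by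
  by_contra hpencil
  have hinter : Pairwise fun i j => (L i ∩ L j : Set P).Subsingleton := fun i j hij =>
    inter_subsingleton_of_finrank_direction_eq_one (hline i) (hline j) (hdistinct.ne hij)
  obtain ⟨⟨⟨hC1, hC3⟩, hC5⟩, hC8⟩ := h.mem_C
  obtain ⟨⟨hr7, hr8⟩, -⟩ := h.mem_r
  have hr5 : r ∈ L 5 := h.r_mem_five hline hinter hpencil
  have hCr : C = r := hinter (show (5 : Fin 10) ≠ 8 by decide) ⟨hC5, hC8⟩ ⟨hr5, hr8⟩
  exact h.iterate_concurrenceStep_ne_univ hinter hpencil hC1 hC3 (hCr ▸ hr7) 5 (by decide)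

end ModifiedPappus

/-- The modified Pappus pseudoline arrangement `𝒫` is unexpected: any arrangement of
ten pairwise distinct, pairwise intersecting complex lines in `ℂ²` satisfying all its
incidence relations must be a pencil (all ten lines are concurrent).
Here `L 0, …, L 9` stand for the lines `L₁, …, L₁₀`. -/
theorem unexpected_pappus_arrangement
    (L : Fin 10 → Set (ℂ × ℂ))
    (hline : ∀ i, IsComplexLine (L i))
    (hdistinct : Function.Injective L)
    (hmeet : ∀ i j, i ≠ j → (L i ∩ L j).Nonempty)
    (a b c A B C p q r : ℂ × ℂ)
    (ha : a ∈ L 0 ∩ L 2 ∩ L 3)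
    (hb : b ∈ L 0 ∩ L 4 ∩ L 5)
    (hc : c ∈ L 0 ∩ L 6 ∩ L 7)
    (hA : A ∈ L 1 ∩ L 4 ∩ L 6)
    (hB : B ∈ L 1 ∩ L 2 ∩ L 7)
    (hC : C ∈ L 1 ∩ L 3 ∩ L 5 ∩ L 8)
    (hp : p ∈ L 2 ∩ L 4 ∩ L 9)
    (hq : q ∈ L 3 ∩ L 6 ∩ L 9)
    (hr : r ∈ L 7 ∩ L 8 ∩ L 9) :
    ∃ z : ℂ × ℂ, ∀ i, z ∈ L i := by
  choose M hM hML using fun i => (hline i).exists_affineSubspace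
  obtain rfl : (fun i => (M i : Set (ℂ × ℂ))) = L := funext hML
  have hinj : Function.Injective M := fun i j hij => hdistinct (congrArg _ hij)
  exact unexpected_pappus_arrangement_general hM hinj ⟨ha, hb, hc, hA, hB, hC, hp, hq, hr⟩
end

section
/- Let L₀, L₁, …, L₁₀ be eleven pairwise distinct complex lines in ℂ² such that every pair L_i, L_j (i ≠ j) has nonempty intersection, and suppose there exist points V, H, P, s₁, s₂, s₃, s₄, a′, b, c ∈ ℂ² with V ∈ L₀ ∩ L₁ ∩ L₂ ∩ L₃ ∩ L₄, H ∈ L₀ ∩ L₅ ∩ L₆ ∩ L₇, P ∈ L₀ ∩ L₈ ∩ L₉, s₁ ∈ L₂ ∩ L₆ ∩ L₈, s₂ ∈ L₃ ∩ L₅ ∩ L₈, s₃ ∈ L₂ ∩ L₇ ∩ L₉, s₄ ∈ L₄ ∩ L₅ ∩ L₉, a′ ∈ L₁ ∩ L₅ ∩ L₁₀, b ∈ L₃ ∩ L₆ ∩ L₁₀, and c ∈ L₄ ∩ L₇ ∩ L₁₀. Then all eleven lines are concurrent. (This says the pseudoline arrangement 𝒬, consisting of four concurrent 'vertical' lines,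 three concurrent 'horizontal' lines, two diagonals, the line at infinity, and a bent pseudoline through a′, b, c, is 'unexpected': the only complex line arrangements satisfying all its incidence relations are pencils.) -/
/-!
If `V = H`, then `s₁`, `s₃` and `a'` are all equal to `V`, which therefore lies on every line.
If `V ≠ H`, the triangles `s₂ s₄ P` and `b c H` are in perspective from `V`, and their corresponding
sides meet at `a'`, `s₃` and `s₁`. Desargues' theorem puts `a'` on the line `s₁ s₃`, which is `L₂`.
Hence `a'` is the common point `V` of `L₁` and `L₂`, so `L₅` contains both `V` and `H` and
coincides with `L₀`, a contradiction.
-/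

open AffineMap AffineSubspace Module
open scoped Affine

section AffineGeometry

variable {k E Ω : Type*} [DivisionRing k] [AddCommGroup E] [Module k E] [AddTorsor E Ω]
variable {s t : AffineSubspace k Ω}

theorem affineSpan_pair_eq_of_finrank_direction_eq_one_s1 (hs : finrank k s.direction = 1)
    {A B : Ω} (hAB : A ≠ B) (hA : A ∈ s) (hB : B ∈ s) : line[k, A, B] = s := by
  have : FiniteDimensional k s.direction := .of_finrank_pos (by omega)
  rw [← Matrix.range_cons_cons_empty A B ![]]
  refine (affineIndependent_of_ne k hAB).affineSpan_eq_of_le_of_card_eq_finrank_add_one ?_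
    (by simp [hs])
  rw [Matrix.range_cons_cons_empty]
  exact affineSpan_pair_le_of_mem_of_mem hA hB

theorem eq_of_mem_of_finrank_direction_eq_one (hs : finrank k s.direction = 1)
    (ht : finrank k t.direction = 1) (hst : s ≠ t) {A B : Ω} (hAs : A ∈ s) (hAt : A ∈ t)
    (hBs : B ∈ s) (hBt : B ∈ t) : A = B := by
  by_contra hAB
  exact hst <| (affineSpan_pair_eq_of_finrank_direction_eq_one_s1 hs hAB hAs hBs).symm.trans
    (affineSpan_pair_eq_of_finrank_direction_eq_one_s1 ht hAB hAt hBt)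

theorem disjoint_direction_of_finrank_direction_eq_one (hs : finrank k s.direction = 1)
    (ht : finrank k t.direction = 1) (hst : s ≠ t) {A : Ω} (hAs : A ∈ s) (hAt : A ∈ t) :
    Disjoint s.direction t.direction := by
  refine Submodule.disjoint_def.mpr fun v hvs hvt => ?_
  have hv : v +ᵥ A = A := eq_of_mem_of_finrank_direction_eq_one hs ht hst
    (vadd_mem_of_mem_direction hvs hAs) (vadd_mem_of_mem_direction hvt hAt) hAs hAt
  exact vadd_right_cancel A (hv.trans (zero_vadd E A).symm)

theorem smul_vsub_eq_of_lineMap_eq_lineMap (hst : Disjoint s.direction t.direction)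
    {A B A' B' X : Ω} (hA : A ∈ s) (hB : B ∈ s) (hXs : X ∈ s) (hA' : A' ∈ t) (hB' : B' ∈ t)
    (hXt : X ∈ t) {p q : k} (h : lineMap A A' p = lineMap B B' q) :
    (1 - p) • (A -ᵥ X) = (1 - q) • (B -ᵥ X) ∧ p • (A' -ᵥ X) = q • (B' -ᵥ X) := by
  have hvsub : (1 - p) • (A -ᵥ X) - (1 - q) • (B -ᵥ X) = q • (B' -ᵥ X) - p • (A' -ᵥ X) := by
    have hX := congrArg (· -ᵥ X) h
    simp only [lineMap_vsub, lineMap_apply_module] at hX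
    rw [sub_eq_sub_iff_add_eq_add, hX, add_comm]
  have hs : (1 - p) • (A -ᵥ X) - (1 - q) • (B -ᵥ X) ∈ s.direction :=
    sub_mem (Submodule.smul_mem _ _ (vsub_mem_direction hA hXs))
      (Submodule.smul_mem _ _ (vsub_mem_direction hB hXs))
  have ht : q • (B' -ᵥ X) - p • (A' -ᵥ X) ∈ t.direction :=
    sub_mem (Submodule.smul_mem _ _ (vsub_mem_direction hB' hXt))
      (Submodule.smul_mem _ _ (vsub_mem_direction hA' hXt))
  have hzero := Submodule.disjoint_def.mp hst _ hs (hvsub ▸ ht)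
  exact ⟨sub_eq_zero.mp hzero, (sub_eq_zero.mp (hvsub ▸ hzero)).symm⟩

/-- **Desargues' theorem** for the triangles `A B C` and `A' B' C'` in perspective from `O`. The
subspaces `a`, `b`, `c` and `a'`, `b'`, `c'` contain the sides opposite to the vertices of the same
name, and corresponding sides meet at `X`, `Y`, `Z`. -/
theorem mem_affineSpan_pair_of_desargues {A B C A' B' C' O X Y Z : Ω}
    {a b c a' b' c' : AffineSubspace k Ω}
    (hAA' : O ∈ line[k, A, A']) (hBB' : O ∈ line[k, B, B']) (hCC' : O ∈ line[k, C, C'])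
    (hAB : A ≠ B) (hA'B' : A' ≠ B')
    (ha : Disjoint a.direction a'.direction) (hb : Disjoint b.direction b'.direction)
    (hc : Disjoint c.direction c'.direction)
    (hBa : B ∈ a) (hCa : C ∈ a) (hXa : X ∈ a) (hBa' : B' ∈ a') (hCa' : C' ∈ a') (hXa' : X ∈ a')
    (hCb : C ∈ b) (hAb : A ∈ b) (hYb : Y ∈ b) (hCb' : C' ∈ b') (hAb' : A' ∈ b') (hYb' : Y ∈ b')
    (hAc : A ∈ c) (hBc : B ∈ c) (hZc : Z ∈ c) (hAc' : A' ∈ c') (hBc' : B' ∈ c') (hZc' : Z ∈ c') :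
    Z ∈ line[k, X, Y] := by
  obtain ⟨p, hp⟩ := mem_affineSpan_pair_iff_exists_lineMap_eq.mp hAA'
  obtain ⟨q, hq⟩ := mem_affineSpan_pair_iff_exists_lineMap_eq.mp hBB'
  obtain ⟨r, hr⟩ := mem_affineSpan_pair_iff_exists_lineMap_eq.mp hCC'
  obtain ⟨hX, -⟩ :=
    smul_vsub_eq_of_lineMap_eq_lineMap ha hBa hCa hXa hBa' hCa' hXa' (hq.trans hr.symm)
  obtain ⟨hY, -⟩ :=
    smul_vsub_eq_of_lineMap_eq_lineMap hb hCb hAb hYb hCb' hAb' hYb' (hr.trans hp.symm)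
  obtain ⟨hZ, hZ'⟩ :=
    smul_vsub_eq_of_lineMap_eq_lineMap hc hAc hBc hZc hAc' hBc' hZc' (hp.trans hq.symm)
  have hpq : q - p ≠ 0 := by
    intro h
    obtain rfl := sub_eq_zero.mp h
    rcases eq_or_ne q 0 with rfl | hq₀
    · simp only [sub_zero, one_smul] at hZ
      exact hAB (vsub_left_cancel hZ)
    · exact hA'B' (vsub_left_cancel (smul_right_injective E hq₀ hZ'))
  have hXYZ : (q - p) • (Z -ᵥ X) = (r - p) • (Y -ᵥ X) := by
    -- The weighted sum of `Z`, `X`, `Y` with weights `q - p`, `r - q`, `p - r` vanishes.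
    rw [← vsub_sub_vsub_cancel_right C Y X, ← vsub_sub_vsub_cancel_right A Y X] at hY
    rw [← vsub_sub_vsub_cancel_right A Z X, ← vsub_sub_vsub_cancel_right B Z X] at hZ
    simp only [sub_smul, smul_sub, one_smul] at hX hY hZ ⊢
    linear_combination (norm := abel) -hX - hY - hZ
  refine mem_affineSpan_pair_iff_exists_lineMap_eq.mpr ⟨(q - p)⁻¹ * (r - p), ?_⟩
  rw [lineMap_apply, mul_smul, ← hXYZ, inv_smul_smul₀ hpq, vsub_vadd]

variable (k Ω) in
/-- Eleven distinct lines in an affine space with marked points satisfying the incidence relations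
of `𝒬`. Marked points are allowed to coincide, and the lines need not be coplanar. -/
structure OrevkovArrangement where
  line : Fin 11 → AffineSubspace k Ω
  finrank_direction_line : ∀ i, finrank k (line i).direction = 1
  line_injective : Function.Injective line
  (V H P s₁ s₂ s₃ s₄ a' b c : Ω)
  V_mem : V ∈ line 0 ⊓ line 1 ⊓ line 2 ⊓ line 3 ⊓ line 4
  H_mem : H ∈ line 0 ⊓ line 5 ⊓ line 6 ⊓ line 7
  P_mem : P ∈ line 0 ⊓ line 8 ⊓ line 9
  s₁_mem : s₁ ∈ line 2 ⊓ line 6 ⊓ line 8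
  s₂_mem : s₂ ∈ line 3 ⊓ line 5 ⊓ line 8
  s₃_mem : s₃ ∈ line 2 ⊓ line 7 ⊓ line 9
  s₄_mem : s₄ ∈ line 4 ⊓ line 5 ⊓ line 9
  a'_mem : a' ∈ line 1 ⊓ line 5 ⊓ line 10
  b_mem : b ∈ line 3 ⊓ line 6 ⊓ line 10
  c_mem : c ∈ line 4 ⊓ line 7 ⊓ line 10

namespace OrevkovArrangement

variable (Q : OrevkovArrangement k Ω)

theorem eq_of_mem (i j : Fin 11) {A B : Ω} (hAi : A ∈ Q.line i) (hAj : A ∈ Q.line j)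
    (hBi : B ∈ Q.line i) (hBj : B ∈ Q.line j) (hij : i ≠ j := by decide) : A = B :=
  eq_of_mem_of_finrank_direction_eq_one (Q.finrank_direction_line i) (Q.finrank_direction_line j)
    (Q.line_injective.ne hij) hAi hAj hBi hBj

theorem disjoint_direction (i j : Fin 11) {A : Ω} (hAi : A ∈ Q.line i) (hAj : A ∈ Q.line j)
    (hij : i ≠ j := by decide) : Disjoint (Q.line i).direction (Q.line j).direction :=
  disjoint_direction_of_finrank_direction_eq_one (Q.finrank_direction_line i)
    (Q.finrank_direction_line j) (Q.line_injective.ne hij) hAi hAj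

theorem mem_affineSpan_pair (i : Fin 11) {A B C : Ω} (hAB : A ≠ B) (hA : A ∈ Q.line i)
    (hB : B ∈ Q.line i) (hC : C ∈ Q.line i) : C ∈ line[k, A, B] :=
  (affineSpan_pair_eq_of_finrank_direction_eq_one_s1 (Q.finrank_direction_line i) hAB hA hB).symm ▸ hC

variable {Q}

theorem H_notMem_of_V_mem (hVH : Q.V ≠ Q.H) (i : Fin 11) (hi : 0 ≠ i)
    (hV : Q.V ∈ Q.line i) : Q.H ∉ Q.line i :=
  fun hH => hVH (Q.eq_of_mem 0 i Q.V_mem.1.1.1.1 hV Q.H_mem.1.1.1 hH hi)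

theorem s₂_ne_b (hVH : Q.V ≠ Q.H) : Q.s₂ ≠ Q.b := by
  obtain ⟨⟨hs₂3, hs₂5⟩, -⟩ := Q.s₂_mem
  obtain ⟨⟨-, hb6⟩, -⟩ := Q.b_mem
  obtain ⟨⟨⟨-, hH5⟩, hH6⟩, -⟩ := Q.H_mem
  intro h
  have hs₂H : Q.s₂ = Q.H := Q.eq_of_mem 5 6 hs₂5 (h ▸ hb6) hH5 hH6
  exact H_notMem_of_V_mem hVH 3 (by decide) Q.V_mem.1.2 (hs₂H ▸ hs₂3)

theorem s₄_ne_c (hVH : Q.V ≠ Q.H) : Q.s₄ ≠ Q.c := by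
  obtain ⟨⟨hs₄4, hs₄5⟩, -⟩ := Q.s₄_mem
  obtain ⟨⟨-, hc7⟩, -⟩ := Q.c_mem
  obtain ⟨⟨⟨-, hH5⟩, -⟩, hH7⟩ := Q.H_mem
  intro h
  have hs₄H : Q.s₄ = Q.H := Q.eq_of_mem 5 7 hs₄5 (h ▸ hc7) hH5 hH7
  exact H_notMem_of_V_mem hVH 4 (by decide) Q.V_mem.2 (hs₄H ▸ hs₄4)

theorem P_ne_H (hVH : Q.V ≠ Q.H) : Q.P ≠ Q.H := by
  obtain ⟨⟨hs₁2, hs₁6⟩, hs₁8⟩ := Q.s₁_mem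
  obtain ⟨⟨-, hP8⟩, -⟩ := Q.P_mem
  intro h
  have hs₁H : Q.s₁ = Q.H := Q.eq_of_mem 6 8 hs₁6 hs₁8 Q.H_mem.1.2 (h ▸ hP8)
  exact H_notMem_of_V_mem hVH 2 (by decide) Q.V_mem.1.1.2 (hs₁H ▸ hs₁2)

theorem s₂_ne_s₄ (hVH : Q.V ≠ Q.H) : Q.s₂ ≠ Q.s₄ := by
  obtain ⟨⟨hs₂3, hs₂5⟩, -⟩ := Q.s₂_mem
  obtain ⟨⟨hs₄4, -⟩, -⟩ := Q.s₄_mem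
  intro h
  have hs₂V : Q.s₂ = Q.V := Q.eq_of_mem 3 4 hs₂3 (h ▸ hs₄4) Q.V_mem.1.2 Q.V_mem.2
  exact H_notMem_of_V_mem hVH 5 (by decide) (hs₂V ▸ hs₂5) Q.H_mem.1.1.2

theorem b_ne_c (hVH : Q.V ≠ Q.H) : Q.b ≠ Q.c := by
  obtain ⟨⟨hb3, hb6⟩, -⟩ := Q.b_mem
  obtain ⟨⟨hc4, -⟩, -⟩ := Q.c_mem
  intro h
  have hbV : Q.b = Q.V := Q.eq_of_mem 3 4 hb3 (h ▸ hc4) Q.V_mem.1.2 Q.V_mem.2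
  exact H_notMem_of_V_mem hVH 6 (by decide) (hbV ▸ hb6) Q.H_mem.1.2

theorem a'_mem_line_two (hVH : Q.V ≠ Q.H) : Q.a' ∈ Q.line 2 := by
  obtain ⟨⟨⟨⟨hV0, -⟩, -⟩, hV3⟩, hV4⟩ := Q.V_mem
  obtain ⟨⟨⟨hH0, -⟩, hH6⟩, hH7⟩ := Q.H_mem
  obtain ⟨⟨hP0, hP8⟩, hP9⟩ := Q.P_mem
  obtain ⟨⟨hs₁2, hs₁6⟩, hs₁8⟩ := Q.s₁_mem
  obtain ⟨⟨hs₂3, hs₂5⟩, hs₂8⟩ := Q.s₂_mem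
  obtain ⟨⟨hs₃2, hs₃7⟩, hs₃9⟩ := Q.s₃_mem
  obtain ⟨⟨hs₄4, hs₄5⟩, hs₄9⟩ := Q.s₄_mem
  obtain ⟨⟨-, ha'5⟩, ha'10⟩ := Q.a'_mem
  obtain ⟨⟨hb3, hb6⟩, hb10⟩ := Q.b_mem
  obtain ⟨⟨hc4, hc7⟩, hc10⟩ := Q.c_mem
  have hs₂b : Q.V ∈ line[k, Q.s₂, Q.b] := Q.mem_affineSpan_pair 3 (s₂_ne_b hVH) hs₂3 hb3 hV3
  have hs₄c : Q.V ∈ line[k, Q.s₄, Q.c] := Q.mem_affineSpan_pair 4 (s₄_ne_c hVH) hs₄4 hc4 hV4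
  have hPH : Q.V ∈ line[k, Q.P, Q.H] := Q.mem_affineSpan_pair 0 (P_ne_H hVH) hP0 hH0 hV0
  have ha's₃s₁ : Q.a' ∈ line[k, Q.s₃, Q.s₁] :=
    mem_affineSpan_pair_of_desargues hs₂b hs₄c hPH (s₂_ne_s₄ hVH) (b_ne_c hVH)
      (Q.disjoint_direction 9 7 hs₃9 hs₃7) (Q.disjoint_direction 8 6 hs₁8 hs₁6)
      (Q.disjoint_direction 5 10 ha'5 ha'10) hs₄9 hP9 hs₃9 hc7 hH7 hs₃7 hP8 hs₂8 hs₁8 hH6 hb6 hs₁6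
      hs₂5 hs₄5 ha'5 hb10 hc10 ha'10
  exact affineSpan_pair_le_of_mem_of_mem hs₃2 hs₁2 ha's₃s₁

variable (Q) in
theorem V_eq_H : Q.V = Q.H := by
  obtain ⟨⟨⟨⟨-, hV1⟩, hV2⟩, -⟩, -⟩ := Q.V_mem
  obtain ⟨⟨ha'1, ha'5⟩, -⟩ := Q.a'_mem
  by_contra hVH
  have ha'V : Q.a' = Q.V := Q.eq_of_mem 1 2 ha'1 (a'_mem_line_two hVH) hV1 hV2
  exact H_notMem_of_V_mem hVH 5 (by decide) (ha'V ▸ ha'5) Q.H_mem.1.1.2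

end OrevkovArrangement

theorem unexpected_orevkov_arrangement_general (Q : OrevkovArrangement k Ω) :
    ∃ z, ∀ i, z ∈ Q.line i := by
  obtain ⟨⟨⟨⟨hV0, hV1⟩, hV2⟩, hV3⟩, hV4⟩ := Q.V_mem
  obtain ⟨⟨⟨-, hV5⟩, hV6⟩, hV7⟩ := Q.V_eq_H ▸ Q.H_mem
  obtain ⟨⟨hs₁2, hs₁6⟩, hV8⟩ := Q.s₁_mem
  obtain ⟨⟨hs₃2, hs₃7⟩, hV9⟩ := Q.s₃_mem
  obtain ⟨⟨ha'1, ha'5⟩, hV10⟩ := Q.a'_mem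
  rw [Q.eq_of_mem 2 6 hs₁2 hs₁6 hV2 hV6] at hV8
  rw [Q.eq_of_mem 2 7 hs₃2 hs₃7 hV2 hV7] at hV9
  rw [Q.eq_of_mem 1 5 ha'1 ha'5 hV1 hV5] at hV10
  exact ⟨Q.V, fun i => by fin_cases i <;> assumption⟩

end AffineGeometry

theorem IsComplexLine.exists_affineSubspace_s1 {L : Set (ℂ × ℂ)} (hL : IsComplexLine L) :
    ∃ s : AffineSubspace ℂ (ℂ × ℂ), finrank ℂ s.direction = 1 ∧ (s : Set (ℂ × ℂ)) = L := by
  obtain ⟨p, d, hd, rfl⟩ := hL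
  refine ⟨mk' p (ℂ ∙ d), by rw [direction_mk', finrank_span_singleton hd], ?_⟩
  ext q
  simp only [SetLike.mem_coe, mem_mk', Submodule.mem_span_singleton, vsub_eq_sub,
    Set.mem_ofPred_eq, eq_sub_iff_add_eq', eq_comm]

/-- The pseudoline arrangement `𝒬` of the paper is unexpected: any arrangement of
eleven pairwise distinct and pairwise intersecting complex lines `L 0, …, L 10`
(standing for `L₀, …, L₁₀`) in `ℂ²` satisfying all the incidence relations of `𝒬`
must be a pencil (all eleven lines are concurrent). -/
theorem unexpected_orevkov_arrangement
    (L : Fin 11 → Set (ℂ × ℂ))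
    (hline : ∀ i, IsComplexLine (L i))
    (hdistinct : Function.Injective L)
    (hmeet : ∀ i j, i ≠ j → (L i ∩ L j).Nonempty)
    (V H P s₁ s₂ s₃ s₄ a' b c : ℂ × ℂ)
    (hV : V ∈ L 0 ∩ L 1 ∩ L 2 ∩ L 3 ∩ L 4)
    (hH : H ∈ L 0 ∩ L 5 ∩ L 6 ∩ L 7)
    (hP : P ∈ L 0 ∩ L 8 ∩ L 9)
    (hs₁ : s₁ ∈ L 2 ∩ L 6 ∩ L 8)
    (hs₂ : s₂ ∈ L 3 ∩ L 5 ∩ L 8)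
    (hs₃ : s₃ ∈ L 2 ∩ L 7 ∩ L 9)
    (hs₄ : s₄ ∈ L 4 ∩ L 5 ∩ L 9)
    (ha' : a' ∈ L 1 ∩ L 5 ∩ L 10)
    (hb : b ∈ L 3 ∩ L 6 ∩ L 10)
    (hc : c ∈ L 4 ∩ L 7 ∩ L 10) :
    ∃ z : ℂ × ℂ, ∀ i, z ∈ L i := by
  choose M hM hML using fun i => (hline i).exists_affineSubspace_s1
  obtain rfl : (fun i => (M i : Set (ℂ × ℂ))) = L := funext hML
  exact unexpected_orevkov_arrangement_general ⟨M, hM, hdistinct.of_comp, V, H, P, s₁, s₂, s₃, s₄,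
    a', b, c, hV, hH, hP, hs₁, hs₂, hs₃, hs₄, ha', hb, hc⟩
end

section
/- Let L₀, L₂, L₃, L₄, L₅, L₆, L₇, L₈, L₉ be pairwise distinct lines in the complex projective plane ℙ²(ℂ). Suppose there are points V ∈ L₀ ∩ L₂ ∩ L₃ ∩ L₄, H ∈ L₀ ∩ L₅ ∩ L₆ ∩ L₇, and P ∈ L₀ ∩ L₈ ∩ L₉ with V, H, P pairwise distinct; suppose L₈ passes through the intersection points L₂ ∩ L₆ and L₃ ∩ L₅, and L₉ passes through L₂ ∩ L₇ and L₄ ∩ L₅; and suppose that none of the nine intersection points L_i ∩ L_j for i ∈ {2,3,4}, j ∈ {5,6,7} lies on L₀. Then the three points a = L₂ ∩ L₅, b = L₃ ∩ L₆ and c = L₄ ∩ L₇ are collinear. -/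
/-- The complex projective plane `ℙ²(ℂ)`, as the projectivization of `ℂ³`. -/
abbrev ProjPlane := Projectivization ℂ (Fin 3 → ℂ)

/-- A line in `ℙ²(ℂ)`: the projectivization of a 2-dimensional linear subspace of `ℂ³`. -/
def IsProjLine (L : Set ProjPlane) : Prop :=
  ∃ W : Submodule ℂ (Fin 3 → ℂ), Module.finrank ℂ W = 2 ∧
    L = {x : ProjPlane | x.submodule ≤ W}

/-- Points of `ℙ²(ℂ)` are collinear if some line contains them all. -/
def ProjCollinear (a b c : ProjPlane) : Prop :=
  ∃ M : Set ProjPlane, IsProjLine M ∧ a ∈ M ∧ b ∈ M ∧ c ∈ M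

/-!
Take `L₀` as the line at infinity and `a` as the origin, so that `L₂, L₃, L₄` are parallel with
direction `V`, and `L₅, L₆, L₇` are parallel with direction `H`. Then `a` and `b` are opposite
vertices of a parallelogram with sides in these directions, whose other diagonal is `L₈`, and
likewise for `a`, `c` and `L₉`. Both diagonals `L₈`, `L₉` have direction `P = α V + β H`, so both
diagonals `ab`, `ac` have direction `α V - β H`, and they coincide.
-/

open Module Submodule
open scoped LinearAlgebra.Projectivization

variable {K E : Type*} [DivisionRing K] [AddCommGroup E] [Module K E]

lemma finrank_span_pair_eq_two {v w : E} (hvw : LinearIndependent K ![v, w]) :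
    finrank K (span K {v, w}) = 2 := by
  rw [← Matrix.range_cons_cons_empty v w ![], finrank_span_eq_card hvw, Fintype.card_fin]

lemma eq_of_linearIndependent_pair {L M : Submodule K E} (hL : finrank K L = 2)
    (hM : finrank K M = 2) {u w : E} (huw : LinearIndependent K ![u, w])
    (huL : u ∈ L) (hwL : w ∈ L) (huM : u ∈ M) (hwM : w ∈ M) : L = M :=
  (Projectivization.line_unique' (huw.ne_zero 0) (huw.ne_zero 1) huw L hL huL hwL).trans
    (Projectivization.line_unique' (huw.ne_zero 0) (huw.ne_zero 1) huw M hM huM hwM).symm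

lemma mem_span_singleton_of_mem_of_mem {L M : Submodule K E} (hL : finrank K L = 2)
    (hM : finrank K M = 2) (hLM : L ≠ M) {u w : E} (hu : u ≠ 0) (huL : u ∈ L) (huM : u ∈ M)
    (hwL : w ∈ L) (hwM : w ∈ M) : w ∈ K ∙ u := by
  by_contra hw
  have hind : LinearIndependent K ![u, w] :=
    (LinearIndependent.pair_iff' hu).2 fun c hc ↦ hw (mem_span_singleton.2 ⟨c, hc⟩)
  exact hLM (eq_of_linearIndependent_pair hL hM hind huL hwL huM hwM)

lemma linearIndependent_pair_of_mem_of_notMem {N : Submodule K E} {v a : E} (hv : v ≠ 0)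
    (hvN : v ∈ N) (haN : a ∉ N) : LinearIndependent K ![v, a] :=
  (LinearIndependent.pair_iff' hv).2 fun c hc ↦ haN (hc ▸ N.smul_mem c hvN)

/-- With `N` at infinity, every finite point `s` of the line through `a` with direction `v` is
represented by some `a + t • v`. -/
lemma exists_add_smul_mem_span_singleton {L N : Submodule K E} (hL : finrank K L = 2)
    {v a s : E} (hv : v ≠ 0) (hvL : v ∈ L) (hvN : v ∈ N) (haL : a ∈ L) (haN : a ∉ N)
    (hsL : s ∈ L) (hsN : s ∉ N) : ∃ t : K, a + t • v ∈ K ∙ s := by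
  have ha : a ≠ 0 := fun h ↦ haN (h ▸ N.zero_mem)
  rw [Projectivization.line_unique' hv ha (linearIndependent_pair_of_mem_of_notMem hv hvN haN)
    L hL hvL haL, mem_span_pair] at hsL
  obtain ⟨q, p, rfl⟩ := hsL
  have hp : p ≠ 0 := by
    rintro rfl
    exact hsN (by simpa using N.smul_mem q hvN)
  refine ⟨p⁻¹ * q, mem_span_singleton.2 ⟨p⁻¹, ?_⟩⟩
  rw [smul_add, smul_smul, inv_smul_smul₀ hp, add_comm]

lemma smul_sub_smul_ne_zero_of_linearIndependent {v w : E} (hvw : LinearIndependent K ![v, w])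
    {α β : K} (h : α • v + β • w ≠ 0) : α • v - β • w ≠ 0 := by
  contrapose! h
  rw [sub_eq_add_neg, ← neg_smul] at h
  obtain ⟨rfl, hβ⟩ := LinearIndependent.pair_iff.1 hvw α (-β) h
  simp [neg_eq_zero.1 hβ]

section Parallelogram

variable {L₀ L₂ L₃ L₅ L₆ L₈ : Submodule K E} {v w a b p : E}

lemma mem_span_pair_of_parallelogram (hL₀ : finrank K L₀ = 2) (hL₃ : finrank K L₃ = 2)
    (hL₆ : finrank K L₆ = 2) (hL₈ : finrank K L₈ = 2) (hvw : LinearIndependent K ![v, w])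
    (hv₀ : v ∈ L₀) (hv₃ : v ∈ L₃) (hw₀ : w ∈ L₀) (hw₆ : w ∈ L₆)
    (hp : p ≠ 0) (hp₀ : p ∈ L₀) (hp₈ : p ∈ L₈) (ha₀ : a ∉ L₀) (hb₃ : b ∈ L₃) (hb₆ : b ∈ L₆)
    {x y : K} (hx₃ : a + x • w ∈ L₃) (hx₈ : a + x • w ∈ L₈)
    (hy₆ : a + y • v ∈ L₆) (hy₈ : a + y • v ∈ L₈) {α β : K} (hpvw : p = α • v + β • w) :
    b ∈ span K {α • v - β • w, a} := by
  have hx₀ : a + x • w ∉ L₀ := by rwa [L₀.add_mem_iff_left (L₀.smul_mem x hw₀)]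
  have hxy₀ : a + x • w + y • v ∉ L₀ := by rwa [L₀.add_mem_iff_left (L₀.smul_mem y hv₀)]
  have hL₀₈ : L₀ ≠ L₈ := fun e ↦ hx₀ (e ▸ hx₈)
  have hL₃₆ : L₃ ≠ L₆ := by
    rintro rfl
    have hL₀₃ : L₀ = L₃ := eq_of_linearIndependent_pair hL₀ hL₃ hvw hv₀ hw₀ hv₃ hw₆
    exact hx₀ (hL₀₃ ▸ hx₃)
  have hdiagonal : x • w - y • v ∈ K ∙ p :=
    mem_span_singleton_of_mem_of_mem hL₀ hL₈ hL₀₈ hp hp₀ hp₈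
      (L₀.sub_mem (L₀.smul_mem x hw₀) (L₀.smul_mem y hv₀))
      (by simpa using L₈.sub_mem hx₈ hy₈)
  have hvertex : b ∈ K ∙ (a + x • w + y • v) :=
    mem_span_singleton_of_mem_of_mem hL₃ hL₆ hL₃₆
      (fun e ↦ hxy₀ (e ▸ L₀.zero_mem))
      (L₃.add_mem hx₃ (L₃.smul_mem y hv₃))
      (add_right_comm a (x • w) (y • v) ▸ L₆.add_mem hy₆ (L₆.smul_mem x hw₆)) hb₃ hb₆
  obtain ⟨k, hk⟩ := mem_span_singleton.1 hdiagonal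
  obtain ⟨c, rfl⟩ := mem_span_singleton.1 hvertex
  obtain ⟨hy, hx⟩ : k * α = -y ∧ k * β = x := by
    refine LinearIndependent.eq_of_pair hvw ?_
    rw [mul_smul, mul_smul, ← smul_add, ← hpvw, hk, neg_smul, neg_add_eq_sub]
  refine mem_span_pair.2 ⟨-(c * k), c, ?_⟩
  rw [← neg_eq_iff_eq_neg.2 hy, ← hx]
  simp only [smul_add, smul_sub, smul_smul, neg_mul, neg_smul, smul_neg, mul_assoc]
  abel

/-- Here `α • v - β • w` is the harmonic conjugate of `p` with respect to `v` and `w`. -/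
lemma mem_span_pair_of_complete_quadrilateral {r s : E} (hL₀ : finrank K L₀ = 2)
    (hL₂ : finrank K L₂ = 2) (hL₃ : finrank K L₃ = 2) (hL₅ : finrank K L₅ = 2)
    (hL₆ : finrank K L₆ = 2) (hL₈ : finrank K L₈ = 2) (hvw : LinearIndependent K ![v, w])
    (hv₀ : v ∈ L₀) (hv₂ : v ∈ L₂) (hv₃ : v ∈ L₃) (hw₀ : w ∈ L₀) (hw₅ : w ∈ L₅) (hw₆ : w ∈ L₆)
    (hp : p ≠ 0) (hp₀ : p ∈ L₀) (hp₈ : p ∈ L₈)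
    (ha₀ : a ∉ L₀) (ha₂ : a ∈ L₂) (ha₅ : a ∈ L₅) (hb₃ : b ∈ L₃) (hb₆ : b ∈ L₆)
    (hs₀ : s ∉ L₀) (hs₂ : s ∈ L₂) (hs₆ : s ∈ L₆) (hs₈ : s ∈ L₈)
    (hr₀ : r ∉ L₀) (hr₃ : r ∈ L₃) (hr₅ : r ∈ L₅) (hr₈ : r ∈ L₈)
    {α β : K} (hpvw : p = α • v + β • w) : b ∈ span K {α • v - β • w, a} := by
  obtain ⟨y, hy⟩ :=
    exists_add_smul_mem_span_singleton hL₂ (hvw.ne_zero 0) hv₂ hv₀ ha₂ ha₀ hs₂ hs₀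
  obtain ⟨x, hx⟩ :=
    exists_add_smul_mem_span_singleton hL₅ (hvw.ne_zero 1) hw₅ hw₀ ha₅ ha₀ hr₅ hr₀
  rw [← span_singleton_le_iff_mem] at hs₆ hs₈ hr₃ hr₈
  exact mem_span_pair_of_parallelogram hL₀ hL₃ hL₆ hL₈ hvw hv₀ hv₃ hw₀ hw₆ hp hp₀ hp₈ ha₀ hb₃ hb₆
    (hr₃ hx) (hr₈ hx) (hs₆ hy) (hs₈ hy) hpvw

end Parallelogram

/-- A line in the projective space `ℙ K E`, as a set of points. For `K = ℂ` and `E = ℂ³` this is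
`IsProjLine`. -/
def IsProjectiveLine (L : Set (ℙ K E)) : Prop :=
  ∃ W : Submodule K E, finrank K W = 2 ∧ L = {x | x.submodule ≤ W}

lemma isProjectiveLine_iff_rep_mem {L : Set (ℙ K E)} :
    IsProjectiveLine L ↔ ∃ W : Submodule K E, finrank K W = 2 ∧ L = {x | x.rep ∈ W} := by
  simp only [IsProjectiveLine, Projectivization.submodule_eq, span_singleton_le_iff_mem]

theorem quadrilateral_collinearity_general
    (L0 L2 L3 L4 L5 L6 L7 L8 L9 : Set (ℙ K E))
    (hlines : ∀ M ∈ [L0, L2, L3, L4, L5, L6, L7, L8, L9], IsProjectiveLine M)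
    (V H P : ℙ K E)
    (hV : V ∈ L0 ∩ L2 ∩ L3 ∩ L4)
    (hH : H ∈ L0 ∩ L5 ∩ L6 ∩ L7)
    (hP : P ∈ L0 ∩ L8 ∩ L9)
    (hVH : V ≠ H)
    (h8 : ∃ s, s ∈ L2 ∩ L6 ∩ L8)
    (h8' : ∃ s, s ∈ L3 ∩ L5 ∩ L8)
    (h9 : ∃ s, s ∈ L2 ∩ L7 ∩ L9)
    (h9' : ∃ s, s ∈ L4 ∩ L5 ∩ L9)
    (havoid : ∀ Li ∈ [L2, L3, L4], ∀ Lj ∈ [L5, L6, L7], ∀ x, x ∈ Li ∩ Lj → x ∉ L0)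
    (a b c : ℙ K E)
    (ha : a ∈ L2 ∩ L5) (hb : b ∈ L3 ∩ L6) (hc : c ∈ L4 ∩ L7) :
    ∃ M, IsProjectiveLine M ∧ a ∈ M ∧ b ∈ M ∧ c ∈ M := by
  simp only [List.forall_mem_cons, List.not_mem_nil, false_implies, implies_true, and_true,
    isProjectiveLine_iff_rep_mem] at hlines havoid ⊢
  obtain ⟨⟨L₀, hL₀, rfl⟩, ⟨L₂, hL₂, rfl⟩, ⟨L₃, hL₃, rfl⟩, ⟨L₄, hL₄, rfl⟩, ⟨L₅, hL₅, rfl⟩,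
    ⟨L₆, hL₆, rfl⟩, ⟨L₇, hL₇, rfl⟩, ⟨L₈, hL₈, rfl⟩, ⟨L₉, hL₉, rfl⟩⟩ := hlines
  obtain ⟨⟨n₂₅, n₂₆, n₂₇⟩, ⟨n₃₅, -, -⟩, ⟨n₄₅, -, -⟩⟩ := havoid
  obtain ⟨⟨⟨hV₀, hV₂⟩, hV₃⟩, hV₄⟩ := hV
  obtain ⟨⟨⟨hH₀, hH₅⟩, hH₆⟩, hH₇⟩ := hH
  obtain ⟨⟨hP₀, hP₈⟩, hP₉⟩ := hP
  obtain ⟨s, ⟨hs₂, hs₆⟩, hs₈⟩ := h8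
  obtain ⟨r, ⟨hr₃, hr₅⟩, hr₈⟩ := h8'
  obtain ⟨t, ⟨ht₂, ht₇⟩, ht₉⟩ := h9
  obtain ⟨u, ⟨hu₄, hu₅⟩, hu₉⟩ := h9'
  have ha₀ : a.rep ∉ L₀ := n₂₅ a ha
  have hVH' : LinearIndependent K ![V.rep, H.rep] :=
    Projectivization.linearIndependent_pair_iff_ne.2 hVH
  obtain ⟨α, β, hPVH⟩ : ∃ α β : K, α • V.rep + β • H.rep = P.rep := by
    rw [← mem_span_pair, ← Projectivization.line_unique' V.rep_nonzero H.rep_nonzero hVH'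
      L₀ hL₀ hV₀ hH₀]
    exact hP₀
  have hb' : b.rep ∈ span K {α • V.rep - β • H.rep, a.rep} :=
    mem_span_pair_of_complete_quadrilateral hL₀ hL₂ hL₃ hL₅ hL₆ hL₈ hVH' hV₀ hV₂ hV₃ hH₀ hH₅ hH₆
      P.rep_nonzero hP₀ hP₈ ha₀ ha.1 ha.2 hb.1 hb.2 (n₂₆ s ⟨hs₂, hs₆⟩) hs₂ hs₆ hs₈
      (n₃₅ r ⟨hr₃, hr₅⟩) hr₃ hr₅ hr₈ hPVH.symm
  have hc' : c.rep ∈ span K {α • V.rep - β • H.rep, a.rep} :=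
    mem_span_pair_of_complete_quadrilateral hL₀ hL₂ hL₄ hL₅ hL₇ hL₉ hVH' hV₀ hV₂ hV₄ hH₀ hH₅ hH₇
      P.rep_nonzero hP₀ hP₉ ha₀ ha.1 ha.2 hc.1 hc.2 (n₂₇ t ⟨ht₂, ht₇⟩) ht₂ ht₇ ht₉
      (n₄₅ u ⟨hu₄, hu₅⟩) hu₄ hu₅ hu₉ hPVH.symm
  have hind : LinearIndependent K ![α • V.rep - β • H.rep, a.rep] :=
    linearIndependent_pair_of_mem_of_notMem
      (smul_sub_smul_ne_zero_of_linearIndependent hVH' (hPVH ▸ P.rep_nonzero))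
      (L₀.sub_mem (L₀.smul_mem α hV₀) (L₀.smul_mem β hH₀)) ha₀
  exact ⟨_, ⟨_, finrank_span_pair_eq_two hind, rfl⟩, subset_span (by simp), hb', hc'⟩

/-- The complete-quadrilateral / harmonic-conjugate lemma: in the configuration of the
paper's arrangement `𝒬` inside `ℙ²(ℂ)`, the points `a = L₂ ∩ L₅`, `b = L₃ ∩ L₆`
and `c = L₄ ∩ L₇` are collinear. -/
theorem quadrilateral_collinearity
    (L0 L2 L3 L4 L5 L6 L7 L8 L9 : Set ProjPlane)
    (hlines : ∀ M ∈ [L0, L2, L3, L4, L5, L6, L7, L8, L9], IsProjLine M)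
    (hdistinct : [L0, L2, L3, L4, L5, L6, L7, L8, L9].Pairwise (· ≠ ·))
    (V H P : ProjPlane)
    (hV : V ∈ L0 ∩ L2 ∩ L3 ∩ L4)
    (hH : H ∈ L0 ∩ L5 ∩ L6 ∩ L7)
    (hP : P ∈ L0 ∩ L8 ∩ L9)
    (hVH : V ≠ H) (hVP : V ≠ P) (hHP : H ≠ P)
    (h8 : ∃ s, s ∈ L2 ∩ L6 ∩ L8)
    (h8' : ∃ s, s ∈ L3 ∩ L5 ∩ L8)
    (h9 : ∃ s, s ∈ L2 ∩ L7 ∩ L9)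
    (h9' : ∃ s, s ∈ L4 ∩ L5 ∩ L9)
    (havoid : ∀ Li ∈ [L2, L3, L4], ∀ Lj ∈ [L5, L6, L7], ∀ x, x ∈ Li ∩ Lj → x ∉ L0)
    (a b c : ProjPlane)
    (ha : a ∈ L2 ∩ L5) (hb : b ∈ L3 ∩ L6) (hc : c ∈ L4 ∩ L7) :
    ProjCollinear a b c :=
  quadrilateral_collinearity_general L0 L2 L3 L4 L5 L6 L7 L8 L9 hlines V H P hV hH hP hVH
    h8 h8' h9 h9' havoid a b c ha hb hc
end

section
/- Let h : ℝ → ℝ be twice differentiable and let w, ρ, χ : ℝ → ℝ be differentiable, with ρ(t) ≥ 0 for all t and χ′(s) ≥ 0 for all s. Define Γ : ℝ² → ℝ⁴ by Γ(t, s) = ( t, s, h(t), w(t) + ρ(t)·χ(s)·h′(t) ). Then at every point (t, s), the standard symplectic form evaluated on the two coordinate tangent vectors of Γ satisfies ω( ∂Γ/∂t (t,s), ∂Γ/∂s (t,s) ) = 1 + ρ(t)·χ′(s)·h′(t)² ≥ 1 > 0; in particular, Γ parametrizes a symplectic surface in ℝ⁴ ≅ ℂ². -/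
/-- The standard symplectic form on `ℝ⁴ ≅ ℂ²` with coordinates `(x₁, x₂, y₁, y₂)`:
`ω(u, v) = u₁v₂ − u₂v₁ + u₃v₄ − u₄v₃`. -/
noncomputable def omega4 (u v : Fin 4 → ℝ) : ℝ :=
  u 0 * v 1 - u 1 * v 0 + u 2 * v 3 - u 3 * v 2

/-!
Over the plane with coordinates `(x₁, x₂) = (t, s)` the surface is a graph `(y₁, y₂) = (f, g)`, and
on the coordinate tangent vectors of a graph `ω` is `1` plus the Jacobian determinant of `(f, g)`.
For a wire, `f = h` does not depend on `s`, so the Jacobian reduces to `h′ · ∂g/∂s`: the derivatives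
of `w`, `ρ` and `h′` drop out. As `s` enters `g` only through `ρ χ h′`, this product is `ρ χ′ h′²`.
-/

/-- The parametrization `(t, s) ↦ (t, s, f(t, s), g(t, s))` of the graph of `(f, g)` over the
`(x₁, x₂)`-plane. Graphical surfaces such as the extension of a wire are treated in this form. -/
def graphSurface {R : Type*} (f g : R → R → R) (t s : R) : Fin 4 → R :=
  ![t, s, f t s, g t s]

section Tangent

variable {𝕜 : Type*} [NontriviallyNormedField 𝕜] {f g : 𝕜 → 𝕜 → 𝕜} {f' g' t s : 𝕜}

theorem hasDerivAt_graphSurface_left (hf : HasDerivAt (fun t' => f t' s) f' t)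
    (hg : HasDerivAt (fun t' => g t' s) g' t) :
    HasDerivAt (fun t' => graphSurface f g t' s) ![1, 0, f', g'] t :=
  hasDerivAt_pi.2 fun
    | 0 => hasDerivAt_id t
    | 1 => hasDerivAt_const t s
    | 2 => hf
    | 3 => hg

theorem hasDerivAt_graphSurface_right (hf : HasDerivAt (f t) f' s) (hg : HasDerivAt (g t) g' s) :
    HasDerivAt (graphSurface f g t) ![0, 1, f', g'] s :=
  hasDerivAt_pi.2 fun
    | 0 => hasDerivAt_const s t
    | 1 => hasDerivAt_id s
    | 2 => hf
    | 3 => hg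

end Tangent

theorem omega4_graph_tangents (a b c d : ℝ) :
    omega4 ![1, 0, a, b] ![0, 1, c, d] = 1 + (a * d - b * c) := by
  simp [omega4, add_sub_assoc]

theorem omega4_deriv_graphSurface {f g : ℝ → ℝ → ℝ} {f₁ f₂ g₁ g₂ t s : ℝ}
    (hf₁ : HasDerivAt (fun t' => f t' s) f₁ t) (hf₂ : HasDerivAt (f t) f₂ s)
    (hg₁ : HasDerivAt (fun t' => g t' s) g₁ t) (hg₂ : HasDerivAt (g t) g₂ s) :
    omega4 (deriv (fun t' => graphSurface f g t' s) t) (deriv (graphSurface f g t) s)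
      = 1 + (f₁ * g₂ - g₁ * f₂) := by
  rw [(hasDerivAt_graphSurface_left hf₁ hg₁).deriv, (hasDerivAt_graphSurface_right hf₂ hg₂).deriv,
    omega4_graph_tangents]

theorem wiring_extension_symplectic_general
    (h w ρ χ : ℝ → ℝ) (t s : ℝ)
    (hh : DifferentiableAt ℝ h t) (hh' : DifferentiableAt ℝ (deriv h) t)
    (hw : DifferentiableAt ℝ w t) (hρ : DifferentiableAt ℝ ρ t) (hχ : DifferentiableAt ℝ χ s)
    (hρχ : 0 ≤ ρ t * deriv χ s)
    (Γ : ℝ → ℝ → Fin 4 → ℝ)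
    (hΓ : ∀ t s, Γ t s = ![t, s, h t, w t + ρ t * χ s * deriv h t]) :
    omega4 (deriv (fun t' => Γ t' s) t) (deriv (fun s' => Γ t s') s)
        = 1 + ρ t * deriv χ s * deriv h t ^ 2 ∧
      1 ≤ 1 + ρ t * deriv χ s * deriv h t ^ 2 ∧
      0 < omega4 (deriv (fun t' => Γ t' s) t) (deriv (fun s' => Γ t s') s) := by
  have hΓ_graph : Γ = graphSurface (fun t _ => h t) (fun t s => w t + ρ t * χ s * deriv h t) :=
    funext₂ hΓ
  have hg_left : DifferentiableAt ℝ (fun t' => w t' + ρ t' * χ s * deriv h t') t := by fun_prop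
  have hg_right : HasDerivAt (fun s' => w t + ρ t * χ s' * deriv h t)
      (ρ t * deriv χ s * deriv h t) s :=
    ((hχ.hasDerivAt.const_mul (ρ t)).mul_const (deriv h t)).const_add (w t)
  have hω : omega4 (deriv (fun t' => Γ t' s) t) (deriv (fun s' => Γ t s') s)
      = 1 + ρ t * deriv χ s * deriv h t ^ 2 := by
    rw [hΓ_graph, omega4_deriv_graphSurface hh.hasDerivAt (hasDerivAt_const s (h t))
      hg_left.hasDerivAt hg_right]
    ring
  have h_one_le : 1 ≤ 1 + ρ t * deriv χ s * deriv h t ^ 2 :=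
    le_add_of_nonneg_right (mul_nonneg hρχ (sq_nonneg _))
  exact ⟨hω, h_one_le, hω ▸ zero_lt_one.trans_le h_one_le⟩

/-- The extension `Γ(t, s) = (t, s, h(t), w(t) + ρ(t)·χ(s)·h′(t))` of a wire of a
braided wiring diagram is a symplectic surface: the standard symplectic form evaluated
on the two coordinate tangent vectors equals `1 + ρ(t)·χ′(s)·h′(t)² ≥ 1 > 0`. -/
theorem wiring_extension_symplectic
    (h w ρ χ : ℝ → ℝ)
    (hh : Differentiable ℝ h) (hh' : Differentiable ℝ (deriv h))
    (hw : Differentiable ℝ w) (hρ : Differentiable ℝ ρ) (hχ : Differentiable ℝ χ)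
    (hρ0 : ∀ t, 0 ≤ ρ t) (hχ' : ∀ s, 0 ≤ deriv χ s)
    (Γ : ℝ → ℝ → Fin 4 → ℝ)
    (hΓ : ∀ t s, Γ t s = ![t, s, h t, w t + ρ t * χ s * deriv h t])
    (t s : ℝ) :
    omega4 (deriv (fun t' => Γ t' s) t) (deriv (fun s' => Γ t s') s)
        = 1 + ρ t * deriv χ s * deriv h t ^ 2 ∧
      1 ≤ 1 + ρ t * deriv χ s * deriv h t ^ 2 ∧
      0 < omega4 (deriv (fun t' => Γ t' s) t) (deriv (fun s' => Γ t s') s) :=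
  wiring_extension_symplectic_general h w ρ χ t s (hh t) (hh' t) (hw t) (hρ t) (hχ s)
    (mul_nonneg (hρ0 t) (hχ' s)) Γ hΓ
end

section
/- Let ρ : ℝ → [0,1] and let χ : ℝ → ℝ satisfy χ(s) = 0 if and only if s = 0. Let h_j, w_j, h_k, w_k : ℝ → ℝ be differentiable, and define Γ_j(t, s) = ( t, s, h_j(t), w_j(t) + ρ(t)·χ(s)·h_j′(t) ) and Γ_k(t, s) = ( t, s, h_k(t), w_k(t) + ρ(t)·χ(s)·h_k′(t) ). Assume that for every t with h_j(t) = h_k(t), either (I) w_j(t) = w_k(t), h_j′(t) ≠ h_k′(t), and ρ(t) = 1, or (II) w_j(t) ≠ w_k(t) and ρ(t) = 0. Then any coincidence Γ_j(t₀, s₀) = Γ_k(t₀, s₀) forces s₀ = 0, h_j(t₀) = h_k(t₀), and w_j(t₀) = w_k(t₀); that is, the two extended surfaces intersect only at intersection points of the original wiring diagram, which lie in the slice s = 0. -/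
/-!
Both surfaces are graphs over the `(t, s)`-plane, so they can only meet over a common `(t, s)`,
where the first wire coordinates agree. If `ρ t = 0` there, neither surface is displaced and the
distinct last coordinates stay distinct; if `ρ t ≠ 0`, the last coordinates differ by `ρ t * χ s`
times the nonzero difference of the slopes, which vanishes only at `s = 0`.
-/

section WireExtension

variable {T S X R E : Type*} [Ring R] [AddCommGroup E] [Module R E]

/-- The surface `(t, s) ↦ (t, s, h t, w t + ρ(t)χ(s) v(t))` obtained from the wire `(h, w)` by
displacing its last coordinate along `v`. Wires of a braided wiring diagram have `T = S = X = E = ℝ`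
and `v = h′`; the four coordinates of `ℝ⁴` are encoded as a product so that they may have different
types. -/
def wireExtension (ρ : T → R) (χ : S → R) (h : T → X) (w v : T → E) (t : T) (s : S) :
    T × S × X × E :=
  (t, s, h t, w t + (ρ t * χ s) • v t)

theorem wireExtension_eq_iff {ρ : T → R} {χ : S → R} {h₁ h₂ : T → X} {w₁ v₁ w₂ v₂ : T → E}
    {t t' : T} {s s' : S} :
    wireExtension ρ χ h₁ w₁ v₁ t s = wireExtension ρ χ h₂ w₂ v₂ t' s' ↔
      (t = t' ∧ s = s') ∧ h₁ t = h₂ t ∧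
        w₁ t + (ρ t * χ s) • v₁ t = w₂ t + (ρ t * χ s) • v₂ t := by
  simp only [wireExtension, Prod.mk.injEq, and_assoc]
  constructor <;> (rintro ⟨rfl, rfl, hh, hw⟩; exact ⟨rfl, rfl, hh, hw⟩)

theorem add_smul_eq_add_smul_iff_of_ne [IsDomain R] [Module.IsTorsionFree R E] {v₁ v₂ : E}
    (hv : v₁ ≠ v₂) (w : E) (c : R) : w + c • v₁ = w + c • v₂ ↔ c = 0 := by
  rw [add_right_inj, ← sub_eq_zero, ← smul_sub, smul_eq_zero_iff_left (sub_ne_zero.2 hv)]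

theorem wiring_extensions_meet_only_at_diagram_intersections_general
    [Zero S] [IsDomain R] [Module.IsTorsionFree R E]
    {ρ : T → R} {χ : S → R} {h₁ h₂ : T → X} {w₁ v₁ w₂ v₂ : T → E}
    (hχ : ∀ s, χ s = 0 ↔ s = 0)
    (hcases : ∀ t, h₁ t = h₂ t →
      (w₁ t = w₂ t ∧ v₁ t ≠ v₂ t ∧ ρ t ≠ 0) ∨ (w₁ t ≠ w₂ t ∧ ρ t = 0))
    {t t' : T} {s s' : S} :
    wireExtension ρ χ h₁ w₁ v₁ t s = wireExtension ρ χ h₂ w₂ v₂ t' s' ↔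
      (t = t' ∧ s = s') ∧ s = 0 ∧ h₁ t = h₂ t ∧ w₁ t = w₂ t := by
  rw [wireExtension_eq_iff, and_left_comm (a := s = 0)]
  refine and_congr_right fun _ => and_congr_right fun hh => ?_
  rcases hcases t hh with ⟨hw, hv, hρ⟩ | ⟨hw, hρ⟩
  · rw [hw, add_smul_eq_add_smul_iff_of_ne hv, mul_eq_zero_iff_left hρ, hχ]
    exact (and_iff_left rfl).symm
  · simp only [hρ, zero_mul, zero_smul, add_zero, hw, and_false]

end WireExtension

/-- Disjointness of the symplectic extensions of two wires of a braided wiring diagram: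
any coincidence `Γ_j(t₀, s₀) = Γ_k(t₀, s₀)` of the extended surfaces
`Γ_j(t,s) = (t, s, h_j(t), w_j(t) + ρ(t)χ(s)h_j′(t))` forces `s₀ = 0`,
`h_j(t₀) = h_k(t₀)` and `w_j(t₀) = w_k(t₀)`, i.e. the surfaces intersect only at
intersection points of the original wiring diagram, which lie in the slice `s = 0`. -/
theorem wiring_extensions_meet_only_at_diagram_intersections
    (ρ χ hj wj hk wk : ℝ → ℝ)
    (hρ : ∀ t, ρ t ∈ Set.Icc (0 : ℝ) 1)
    (hχ : ∀ s, χ s = 0 ↔ s = 0)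
    (hhj : Differentiable ℝ hj) (hwj : Differentiable ℝ wj)
    (hhk : Differentiable ℝ hk) (hwk : Differentiable ℝ wk)
    (Γj Γk : ℝ → ℝ → Fin 4 → ℝ)
    (hΓj : ∀ t s, Γj t s = ![t, s, hj t, wj t + ρ t * χ s * deriv hj t])
    (hΓk : ∀ t s, Γk t s = ![t, s, hk t, wk t + ρ t * χ s * deriv hk t])
    (hcases : ∀ t, hj t = hk t →
      (wj t = wk t ∧ deriv hj t ≠ deriv hk t ∧ ρ t = 1) ∨
      (wj t ≠ wk t ∧ ρ t = 0))
    (t₀ s₀ : ℝ) (hco : Γj t₀ s₀ = Γk t₀ s₀) :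
    s₀ = 0 ∧ hj t₀ = hk t₀ ∧ wj t₀ = wk t₀ := by
  have hext : wireExtension ρ χ hj wj (deriv hj) t₀ s₀ = wireExtension ρ χ hk wk (deriv hk) t₀ s₀ :=
    wireExtension_eq_iff.2 (by simpa [hΓj, hΓk] using hco)
  exact ((wiring_extensions_meet_only_at_diagram_intersections_general hχ fun t hh =>
    (hcases t hh).imp_left fun ⟨hw, hd, hρt⟩ => ⟨hw, hd, hρt ▸ one_ne_zero⟩).1 hext).2
end

section
/- Let M ≥ 1, δ > 0, η > 0, and let f, g : [−M, M] → ℝ be differentiable. Suppose there is an open interval (a, b) with −M < a < b < M such that { x ∈ [−M, M] : |f(x) − g(x)| < δ } = (a, b), and suppose |f′(x) − g′(x)| > η for every x ∈ (a, b). Let p, q : [−M, M] → ℝ be differentiable functions with |p(x) − f(x)| < δ/3, |q(x) − g(x)| < δ/3, |p′(x) − f′(x)| < η/3, and |q′(x) − g′(x)| < η/3 for every x ∈ [−M, M]. Then the function p − q has exactly one zero in [−M, M], and this zero lies in (a, b). -/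
/-!
Wherever `|v - u| < |u|`, the numbers `u` and `v` have the same strict sign. Take `u = f - g` and
`v = p - q`. Outside `(a, b)` we have `|v - u| < δ ≤ |u|`, so `v` has no zero there. Inside `(a, b)`
the same comparison for the derivatives shows that neither `u'` nor `v'` vanishes, so by Rolle's
theorem `u` and `v` are injective on `[a, b]`. By continuity `|u a| = |u b| = δ`, hence injectivity
forces `u a = -u b`; as `v` has the same signs as `u` at the endpoints, it vanishes in between, and
only once because it is injective.
-/

open Set

section OrderedRing

variable {R : Type*} [CommRing R] [LinearOrder R] [IsStrictOrderedRing R] {x y : R}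

theorem mul_pos_of_abs_sub_lt_abs (h : |y - x| < |x|) : 0 < x * y := by
  have hsq : (y - x) ^ 2 < x ^ 2 := sq_lt_sq.2 h
  nlinarith [sq_nonneg y]

theorem ne_zero_of_abs_sub_lt_abs (h : |y - x| < |x|) : y ≠ 0 :=
  right_ne_zero_of_mul (mul_pos_of_abs_sub_lt_abs h).ne'

end OrderedRing

theorem abs_sub_sub_sub_lt_add {G : Type*} [AddCommGroup G] [LinearOrder G] [IsOrderedAddMonoid G]
    {x y z w r t : G} (hxy : |x - y| < r) (hzw : |z - w| < t) : |x - z - (y - w)| < r + t := by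
  rw [sub_sub_sub_comm]
  exact (abs_sub _ _).trans_lt (add_lt_add hxy hzw)

theorem eq_of_mem_closure_of_notMem_sublevel {X α : Type*} [TopologicalSpace X]
    [TopologicalSpace α] [LinearOrder α] [OrderClosedTopology α] {φ : X → α} {s : Set X} {c : α}
    {x : X} (hφ : ContinuousWithinAt φ {y | y ∈ s ∧ φ y < c} x) (hxs : x ∈ s)
    (hx : x ∈ closure {y | y ∈ s ∧ φ y < c}) (hxc : x ∉ {y | y ∈ s ∧ φ y < c}) : φ x = c :=
  le_antisymm (hφ.closure_le hx continuousWithinAt_const fun _ hy => hy.2.le)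
    (not_lt.1 fun hlt => hxc ⟨hxs, hlt⟩)

theorem injOn_of_deriv_ne_zero {s : Set ℝ} (hs : Convex ℝ s) {f : ℝ → ℝ} (hf : ContinuousOn f s)
    (hf' : ∀ x ∈ interior s, deriv f x ≠ 0) : InjOn f s := by
  refine injOn_iff_pairwise_ne.2 fun x hx y hy hne hxy => ?_
  wlog hlt : x < y generalizing x y
  · exact this y hy x hx hne.symm hxy.symm (hne.symm.lt_of_le (not_lt.1 hlt))
  have hsub : Icc x y ⊆ s := hs.ordConnected.out hx hy
  obtain ⟨c, hc, hc0⟩ := exists_deriv_eq_zero hlt (hf.mono hsub) hxy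
  exact hf' c (interior_maximal (Ioo_subset_Icc_self.trans hsub) isOpen_Ioo hc) hc0

section IntermediateValue

variable {α R : Type*} [ConditionallyCompleteLinearOrder α] [TopologicalSpace α] [OrderTopology α]
  [DenselyOrdered α] [LinearOrder R] [TopologicalSpace R] [OrderClosedTopology R] {a b : α}

theorem exists_mem_uIcc_eq_zero_of_mul_nonpos [Ring R] [IsStrictOrderedRing R] {f : α → R}
    (hf : ContinuousOn f (uIcc a b)) (h : f a * f b ≤ 0) : ∃ x ∈ uIcc a b, f x = 0 := by
  have hzero : (0 : R) ∈ uIcc (f a) (f b) := by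
    rw [mem_uIcc]
    exact (mul_nonpos_iff.1 h).symm.imp id And.symm
  exact intermediate_value_uIcc hf hzero

theorem exists_mem_uIcc_eq_zero_of_abs_sub_lt_abs [CommRing R] [IsStrictOrderedRing R]
    {u v : α → R} (hv : ContinuousOn v (uIcc a b)) (hopp : u a = -u b)
    (ha : |v a - u a| < |u a|) (hb : |v b - u b| < |u b|) : ∃ x ∈ uIcc a b, v x = 0 := by
  refine exists_mem_uIcc_eq_zero_of_mul_nonpos hv ?_
  have hsign : 0 < -(u b ^ 2 * (v a * v b)) :=
    calc 0 < (u a * v a) * (u b * v b) :=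
          mul_pos (mul_pos_of_abs_sub_lt_abs ha) (mul_pos_of_abs_sub_lt_abs hb)
      _ = -(u b ^ 2 * (v a * v b)) := by rw [hopp]; ring
  exact (neg_of_mul_neg_right (neg_pos.1 hsign) (sq_nonneg _)).le

end IntermediateValue

theorem eq_neg_of_sublevel_abs_eq_Ioo {s : Set ℝ} {a b δ : ℝ} {u : ℝ → ℝ} (hab : a < b)
    (hs : Icc a b ⊆ s) (hu : ContinuousOn u (Icc a b)) (hu' : ∀ x ∈ Ioo a b, deriv u x ≠ 0)
    (hset : {x | x ∈ s ∧ |u x| < δ} = Ioo a b) : u a = -u b := by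
  have habs : ∀ x ∈ Icc a b, x ∉ Ioo a b → |u x| = δ := fun x hx hxab => by
    have hcont : ContinuousWithinAt (fun y => |u y|) (Ioo a b) x :=
      (hu.abs x hx).mono Ioo_subset_Icc_self
    have hcl : x ∈ closure (Ioo a b) := by rwa [closure_Ioo hab.ne]
    rw [← hset] at hcont hcl hxab
    exact eq_of_mem_closure_of_notMem_sublevel (φ := fun y => |u y|) hcont (hs hx) hcl hxab
  have ha : a ∈ Icc a b := left_mem_Icc.2 hab.le
  have hb : b ∈ Icc a b := right_mem_Icc.2 hab.le
  have hinj : InjOn u (Icc a b) :=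
    injOn_of_deriv_ne_zero (convex_Icc a b) hu (by rwa [interior_Icc])
  have heq : |u a| = |u b| := (habs a ha left_notMem_Ioo).trans (habs b hb right_notMem_Ioo).symm
  exact (abs_eq_abs.1 heq).resolve_left fun h => hab.ne (hinj ha hb h)

theorem perturbed_crossing_unique_general {s : Set ℝ} {a b δ : ℝ} {u v u' v' : ℝ → ℝ}
    (hab : a < b) (hs : Icc a b ⊆ s)
    (hu : ContinuousOn u (Icc a b)) (hu' : ∀ x ∈ Ioo a b, HasDerivAt u (u' x) x)
    (hv : ContinuousOn v (Icc a b)) (hv' : ∀ x ∈ Ioo a b, HasDerivAt v (v' x) x)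
    (hset : {x | x ∈ s ∧ |u x| < δ} = Ioo a b) (hclose : ∀ x ∈ s, |v x - u x| < δ)
    (hclose' : ∀ x ∈ Ioo a b, |v' x - u' x| < |u' x|) :
    (∃! x, x ∈ s ∧ v x = 0) ∧ ∀ x ∈ s, v x = 0 → x ∈ Ioo a b := by
  have hdom : ∀ x ∈ s, x ∉ Ioo a b → |v x - u x| < |u x| := fun x hx hxab =>
    (hclose x hx).trans_le (not_lt.1 fun hlt => hxab (hset ▸ ⟨hx, hlt⟩))
  have hloc : ∀ x ∈ s, v x = 0 → x ∈ Ioo a b := fun x hx h0 =>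
    by_contra fun hxab => ne_zero_of_abs_sub_lt_abs (hdom x hx hxab) h0
  have hinj : InjOn v (Icc a b) := by
    refine injOn_of_deriv_ne_zero (convex_Icc a b) hv fun x hx => ?_
    rw [interior_Icc] at hx
    exact (hv' x hx).deriv ▸ ne_zero_of_abs_sub_lt_abs (hclose' x hx)
  have hopp : u a = -u b := eq_neg_of_sublevel_abs_eq_Ioo hab hs hu
    (fun x hx => (hu' x hx).deriv ▸ abs_pos.1 ((abs_nonneg _).trans_lt (hclose' x hx))) hset
  rw [← uIcc_of_le hab.le] at hs hv hinj
  obtain ⟨x, hx, hx0⟩ := exists_mem_uIcc_eq_zero_of_abs_sub_lt_abs hv hopp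
    (hdom a (hs left_mem_uIcc) left_notMem_Ioo) (hdom b (hs right_mem_uIcc) right_notMem_Ioo)
  refine ⟨⟨x, ⟨hs hx, hx0⟩, fun y hy => ?_⟩, hloc⟩
  exact hinj (Ioo_subset_Icc_self.trans Icc_subset_uIcc (hloc y hy.1 hy.2)) hx (hy.2.trans hx0.symm)

/-- Stability of crossings under `C¹`-small perturbation: if `|f − g| < δ` exactly on
`(a, b) ⊆ [−M, M]`, the slopes satisfy `|f′ − g′| > η` on `(a, b)`, and `p, q`
approximate `f, g` within `δ/3` in `C⁰` and within `η/3` in `C¹` on `[−M, M]`,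
then `p − q` has exactly one zero in `[−M, M]`, and this zero lies in `(a, b)`. -/
theorem perturbed_crossing_unique
    (M δ η : ℝ) (hM : 1 ≤ M) (hδ : 0 < δ) (hη : 0 < η)
    (a b : ℝ) (haM : -M < a) (hab : a < b) (hbM : b < M)
    (f g p q f' g' p' q' : ℝ → ℝ)
    (hf : ∀ x ∈ Set.Icc (-M) M, HasDerivWithinAt f (f' x) (Set.Icc (-M) M) x)
    (hg : ∀ x ∈ Set.Icc (-M) M, HasDerivWithinAt g (g' x) (Set.Icc (-M) M) x)
    (hp : ∀ x ∈ Set.Icc (-M) M, HasDerivWithinAt p (p' x) (Set.Icc (-M) M) x)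
    (hq : ∀ x ∈ Set.Icc (-M) M, HasDerivWithinAt q (q' x) (Set.Icc (-M) M) x)
    (hset : {x | x ∈ Set.Icc (-M) M ∧ |f x - g x| < δ} = Set.Ioo a b)
    (hslope : ∀ x ∈ Set.Ioo a b, η < |f' x - g' x|)
    (hpf : ∀ x ∈ Set.Icc (-M) M, |p x - f x| < δ / 3)
    (hqg : ∀ x ∈ Set.Icc (-M) M, |q x - g x| < δ / 3)
    (hpf' : ∀ x ∈ Set.Icc (-M) M, |p' x - f' x| < η / 3)
    (hqg' : ∀ x ∈ Set.Icc (-M) M, |q' x - g' x| < η / 3) :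
    (∃! x, x ∈ Set.Icc (-M) M ∧ p x - q x = 0) ∧
    (∀ x ∈ Set.Icc (-M) M, p x - q x = 0 → x ∈ Set.Ioo a b) := by
  have hsub : Icc a b ⊆ Icc (-M) M := Icc_subset_Icc haM.le hbM.le
  have hu : ∀ x ∈ Icc a b, HasDerivWithinAt (fun y => f y - g y) (f' x - g' x) (Icc a b) x :=
    fun x hx => ((hf x (hsub hx)).sub (hg x (hsub hx))).mono hsub
  have hv : ∀ x ∈ Icc a b, HasDerivWithinAt (fun y => p y - q y) (p' x - q' x) (Icc a b) x :=
    fun x hx => ((hp x (hsub hx)).sub (hq x (hsub hx))).mono hsub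
  have hclose : ∀ x ∈ Icc (-M) M, |p x - q x - (f x - g x)| < δ := fun x hx =>
    (abs_sub_sub_sub_lt_add (hpf x hx) (hqg x hx)).trans (by linarith)
  have hclose' : ∀ x ∈ Ioo a b, |p' x - q' x - (f' x - g' x)| < |f' x - g' x| := fun x hx =>
    have hxM := hsub (Ioo_subset_Icc_self hx)
    (abs_sub_sub_sub_lt_add (hpf' x hxM) (hqg' x hxM)).trans (by linarith [hslope x hx])
  exact perturbed_crossing_unique_general hab hsub
    (HasDerivWithinAt.continuousOn hu)
    (fun x hx => (hu x (Ioo_subset_Icc_self hx)).hasDerivAt (Icc_mem_nhds hx.1 hx.2))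
    (HasDerivWithinAt.continuousOn hv)
    (fun x hx => (hv x (Ioo_subset_Icc_self hx)).hasDerivAt (Icc_mem_nhds hx.1 hx.2))
    hset hclose hclose'
end

section
/- Let M ≥ 1, δ > 0, η > 0, m ≥ 2, and let f₁, …, f_m : [−M, M] × [0, 1] → ℝ be continuously differentiable functions with f_i(0, 0) = 0 for every i, and such that for every t ∈ [0, 1] and every pair i ≠ j: (i) there is exactly one x̄ ∈ [−M, M] with f_i(x̄, t) = f_j(x̄, t); (ii) the set { x ∈ [−M, M] : |f_i(x, t) − f_j(x, t)| < δ } is an open interval (a, b) with −M < a < b < M containing x̄; (iii) |∂f_i/∂x (x, t) − ∂f_j/∂x (x, t)| > η whenever |f_i(x, t) − f_j(x, t)| < δ. Let x₁, …, x_n ∈ [−M, M] be the points at which at least two of the functions f_i(·, 1) agree. Then for every ε > 0 there exist real polynomials p₁, …, p_m in the variables (x, t) such that: |p_i(x, t) − f_i(x, t)| < min(δ/3, η/3, ε) and |∂p_i/∂x (x, t) − ∂f_i/∂x (x, t)| < min(δ/3, η/3, ε) on [−M, M] × [0, 1]; p_i(0, 0) = 0 for every i; p_i(x_k, 1) = f_i(x_k,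 1) for every i and every k; and for every t ∈ [0, 1] and every i ≠ j the function x ↦ p_i(x, t) − p_j(x, t) has exactly one zero in [−M, M]. -/
/-!
A polynomial close to `∂f/∂x`, integrated in `x` and corrected by a polynomial in `t` alone, is
close to `f` together with its `x`-derivative. Hence the pair `(f, ∂f/∂x)` lies in the closure
of the space `V` of pairs `(p, ∂p/∂x)` in the supremum norm. Prescribing the values of `p` at
finitely many points means staying on a fibre of a continuous linear map `Φ` to a
finite-dimensional space. As `Φ(V)` is closed, it contains the value of `Φ` at `(f, ∂f/∂x)`, and
a linear right inverse of `Φ` on `Φ(V)` turns approximations in `V` into approximations in `V`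
on that fibre.

A function `C¹`-close to the difference `g` of two members of the family has no zero where
`|g| ≥ δ`. On the interval where `|g| < δ` its derivative does not vanish, and at the two ends
it has the signs of `g`, which are opposite; so it has exactly one zero.
-/

open Set Function MvPolynomial

section Transversality

variable {A B a b δ η : ℝ} {g g' q q' : ℝ → ℝ}

theorem injOn_Icc_of_hasDerivAt_ne_zero (hg : ContinuousOn g (Icc a b))
    (hg' : ∀ x ∈ Ioo a b, HasDerivAt g (g' x) x) (hne : ∀ x ∈ Ioo a b, g' x ≠ 0) :
    InjOn g (Icc a b) := by
  intro x hx y hy hxy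
  by_contra hxy_ne
  wlog hlt : x < y generalizing x y
  · exact this hy hx hxy.symm (Ne.symm hxy_ne) ((not_lt.1 hlt).lt_of_ne' hxy_ne)
  obtain ⟨z, hz, hz0⟩ := exists_hasDerivAt_eq_zero hlt (hg.mono (Icc_subset_Icc hx.1 hy.2)) hxy
    fun w hw => hg' w (Ioo_subset_Ioo hx.1 hy.2 hw)
  exact hne z (Ioo_subset_Ioo hx.1 hy.2 hz) hz0

theorem mul_neg_of_injOn_Icc_of_zero (hg : ContinuousOn g (Icc a b)) (hinj : InjOn g (Icc a b))
    {c : ℝ} (hc : c ∈ Ioo a b) (hgc : g c = 0) : g a * g b < 0 := by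
  have hab : a ≤ b := (hc.1.trans hc.2).le
  have ha : a ∈ Icc a b := left_mem_Icc.2 hab
  have hb : b ∈ Icc a b := right_mem_Icc.2 hab
  have hc' : c ∈ Icc a b := Ioo_subset_Icc_self hc
  rcases hg.strictMonoOn_of_injOn_Icc' hab hinj with hmono | hanti
  · exact mul_neg_of_neg_of_pos (hgc ▸ hmono ha hc' hc.1) (hgc ▸ hmono hc' hb hc.2)
  · exact mul_neg_of_pos_of_neg (hgc ▸ hanti ha hc' hc.1) (hgc ▸ hanti hc' hb hc.2)

theorem mul_neg_of_abs_sub_lt_abs {u v u' v' : ℝ} (huv : u * v < 0) (hu : |u' - u| < |u|)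
    (hv : |v' - v| < |v|) : u' * v' < 0 := by
  rcases mul_neg_iff.1 huv with ⟨hu0, hv0⟩ | ⟨hu0, hv0⟩
  · rw [abs_of_pos hu0, abs_lt] at hu
    rw [abs_of_neg hv0, abs_lt] at hv
    exact mul_neg_of_pos_of_neg (by linarith) (by linarith)
  · rw [abs_of_neg hu0, abs_lt] at hu
    rw [abs_of_pos hv0, abs_lt] at hv
    exact mul_neg_of_neg_of_pos (by linarith) (by linarith)

theorem exists_mem_Icc_eq_zero_of_mul_nonpos (hab : a ≤ b) (hq : ContinuousOn q (Icc a b))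
    (hsign : q a * q b ≤ 0) : ∃ x ∈ Icc a b, q x = 0 := by
  rw [← uIcc_of_le hab] at hq ⊢
  exact intermediate_value_uIcc hq (mem_uIcc.2 ((mul_nonpos_iff.1 hsign).symm.imp_right And.symm))

/-- A function `g` with derivative `g'` crosses zero on `[A, B]` *`(δ, η)`-transversally*: it has
a zero, it is smaller than `δ` in absolute value exactly on an open interval, and its slope there
exceeds `η` in absolute value. This is the condition on the difference of two pseudolines. That
`g'` is the derivative of `g` is not part of the notion. -/
structure CrossesZeroTransversally (A B δ η : ℝ) (g g' : ℝ → ℝ) : Prop where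
  exists_zero : ∃ x ∈ Icc A B, g x = 0
  exists_eq_Ioo : ∃ a b, {x | x ∈ Icc A B ∧ |g x| < δ} = Ioo a b
  slope_gap : ∀ x ∈ Icc A B, |g x| < δ → η < |g' x|

theorem CrossesZeroTransversally.exists_Ioo (h : CrossesZeroTransversally A B δ η g g')
    (hδ : 0 < δ) : ∃ a b, Icc a b ⊆ Icc A B ∧ (∃ c ∈ Ioo a b, g c = 0) ∧
      ∀ x ∈ Icc A B, x ∈ Ioo a b ↔ |g x| < δ := by
  obtain ⟨c, hc, hgc⟩ := h.exists_zero
  obtain ⟨a, b, hset⟩ := h.exists_eq_Ioo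
  have hc_mem : c ∈ Ioo a b := hset.subset ⟨hc, by simpa [hgc] using hδ⟩
  refine ⟨a, b, ?_, ⟨c, hc_mem, hgc⟩, fun x hx => ?_⟩
  · rw [← closure_Ioo (hc_mem.1.trans hc_mem.2).ne]
    exact closure_minimal (fun x hx => (hset.symm.subset hx).1) isClosed_Icc
  · rw [← hset]
    exact and_iff_right hx

theorem CrossesZeroTransversally.existsUnique_zero_of_near
    (h : CrossesZeroTransversally A B δ η g g')
    (hg : ∀ x ∈ Icc A B, HasDerivWithinAt g (g' x) (Icc A B) x)
    (hq : ∀ x ∈ Icc A B, HasDerivWithinAt q (q' x) (Icc A B) x)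
    (hqg : ∀ x ∈ Icc A B, |q x - g x| < δ) (hqg' : ∀ x ∈ Icc A B, |q' x - g' x| < η) :
    ∃! x, x ∈ Icc A B ∧ q x = 0 := by
  obtain ⟨x₀, hx₀, -⟩ := h.exists_zero
  have hη : 0 < η := (abs_nonneg _).trans_lt (hqg' x₀ hx₀)
  obtain ⟨a, b, hsub, ⟨c, hc, hgc⟩, hIoo⟩ :=
    h.exists_Ioo ((abs_nonneg _).trans_lt (hqg x₀ hx₀))
  have hab : a < b := hc.1.trans hc.2
  have hslope {x : ℝ} (hx : x ∈ Ioo a b) : η < |g' x| :=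
    have hxI := hsub (Ioo_subset_Icc_self hx)
    h.slope_gap x hxI ((hIoo x hxI).1 hx)
  have hlarge {x : ℝ} (hx : x ∈ Icc A B) (hx' : x ∉ Ioo a b) : |q x - g x| < |g x| :=
    (hqg x hx).trans_le (not_lt.1 ((hIoo x hx).not.1 hx'))
  have hcont {r r' : ℝ → ℝ} (hr : ∀ x ∈ Icc A B, HasDerivWithinAt r (r' x) (Icc A B) x) :
      ContinuousOn r (Icc a b) := (HasDerivWithinAt.continuousOn hr).mono hsub
  have hderiv {r r' : ℝ → ℝ} (hr : ∀ x ∈ Icc A B, HasDerivWithinAt r (r' x) (Icc A B) x) :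
      ∀ x ∈ Ioo a b, HasDerivAt r (r' x) x := fun x hx =>
    (hr x (hsub (Ioo_subset_Icc_self hx))).hasDerivAt
      (Filter.mem_of_superset (Icc_mem_nhds hx.1 hx.2) hsub)
  have hg_inj : InjOn g (Icc a b) :=
    injOn_Icc_of_hasDerivAt_ne_zero (hcont hg) (hderiv hg) fun x hx =>
      abs_pos.1 (hη.trans (hslope hx))
  have hq_inj : InjOn q (Icc a b) :=
    injOn_Icc_of_hasDerivAt_ne_zero (hcont hq) (hderiv hq) fun x hx hx0 =>
      (hslope hx).not_gt (by simpa [hx0] using hqg' x (hsub (Ioo_subset_Icc_self hx)))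
  have hq_sign : q a * q b < 0 := mul_neg_of_abs_sub_lt_abs
    (mul_neg_of_injOn_Icc_of_zero (hcont hg) hg_inj hc hgc)
    (hlarge (hsub (left_mem_Icc.2 hab.le)) (by simp))
    (hlarge (hsub (right_mem_Icc.2 hab.le)) (by simp))
  obtain ⟨x, hx, hqx⟩ := exists_mem_Icc_eq_zero_of_mul_nonpos hab.le (hcont hq) hq_sign.le
  refine ⟨x, ⟨hsub hx, hqx⟩, fun y ⟨hy, hqy⟩ => hq_inj ?_ hx (hqy.trans hqx.symm)⟩
  by_contra hy'
  simpa [hqy] using hlarge hy fun hyI => hy' (Ioo_subset_Icc_self hyI)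

end Transversality

section PartialDerivatives

variable {σ : Type*}

theorem exists_pderiv_eq {𝕜 : Type*} [Field 𝕜] [CharZero 𝕜] (i : σ) (p : MvPolynomial σ 𝕜) :
    ∃ r : MvPolynomial σ 𝕜, pderiv i r = p := by
  induction p using MvPolynomial.induction_on' with
  | monomial s c =>
    refine ⟨monomial (s + Finsupp.single i 1) (c / (s i + 1)), ?_⟩
    have : (s i : 𝕜) + 1 ≠ 0 := by exact_mod_cast Nat.succ_ne_zero (s i)
    simp [pderiv_monomial, this]
  | add p₁ p₂ h₁ h₂ =>
    obtain ⟨r₁, rfl⟩ := h₁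
    obtain ⟨r₂, rfl⟩ := h₂
    exact ⟨r₁ + r₂, map_add _ _ _⟩

variable [DecidableEq σ]

theorem hasDerivAt_eval_update {𝕜 : Type*} [NontriviallyNormedField 𝕜] (p : MvPolynomial σ 𝕜)
    (v : σ → 𝕜) (i : σ) (s : 𝕜) :
    HasDerivAt (fun y => eval (update v i y) p) (eval (update v i s) (pderiv i p)) s := by
  induction p using MvPolynomial.induction_on with
  | C c => simpa using hasDerivAt_const s c
  | add p₁ p₂ h₁ h₂ => simpa using h₁.fun_add h₂
  | mul_X p j h =>
    rcases eq_or_ne j i with rfl | hji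
    · simpa [pderiv_mul, mul_comm, add_comm] using h.fun_mul (hasDerivAt_id' s)
    · simpa [pderiv_mul, pderiv_X_of_ne hji, hji, mul_comm] using h.mul_const (v j)

theorem eval_bind₁_update_X {R : Type*} [CommSemiring R] (p : MvPolynomial σ R) (v : σ → R)
    (i : σ) (c : R) : eval v (bind₁ (update X i (C c)) p) = eval (update v i c) p := by
  induction p using MvPolynomial.induction_on with
  | C r => simp
  | add p₁ p₂ h₁ h₂ => simp [h₁, h₂]
  | mul_X p j h => rcases eq_or_ne j i with rfl | hji <;> simp [*]

theorem pderiv_bind₁_update_X {R : Type*} [CommSemiring R] (p : MvPolynomial σ R) (i : σ)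
    (c : R) : pderiv i (bind₁ (update X i (C c)) p) = 0 := by
  induction p using MvPolynomial.induction_on with
  | C r => simp
  | add p₁ p₂ h₁ h₂ => simp [h₁, h₂]
  | mul_X p j h => rcases eq_or_ne j i with rfl | hji <;> simp [*]

theorem update_mem_Icc {α : σ → Type*} [∀ j, Preorder (α j)] {a b v : ∀ j, α j}
    (hv : v ∈ Icc a b) {i : σ} {s : α i}
    (hs : s ∈ Icc (a i) (b i)) : update v i s ∈ Icc a b :=
  ⟨le_update_iff.2 ⟨hs.1, fun j _ => hv.1 j⟩, update_le_iff.2 ⟨hs.2, fun j _ => hv.2 j⟩⟩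

theorem abs_sub_update_left_le {a b : σ → ℝ} {i : σ} {f f' : (σ → ℝ) → ℝ} {C : ℝ}
    (hf : ∀ v ∈ Icc a b, HasDerivWithinAt (fun s => f (update v i s)) (f' v)
      (Icc (a i) (b i)) (v i))
    (hC : ∀ v ∈ Icc a b, |f' v| ≤ C) {v : σ → ℝ} (hv : v ∈ Icc a b) :
    |f v - f (update v i (a i))| ≤ C * (v i - a i) := by
  have hvi : v i ∈ Icc (a i) (b i) := ⟨hv.1 i, hv.2 i⟩
  have hbound := (convex_Icc (a i) (b i)).norm_image_sub_le_of_norm_hasDerivWithin_le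
    (f := fun s => f (update v i s)) (f' := fun s => f' (update v i s))
    (fun s hs => by simpa using hf _ (update_mem_Icc hv hs))
    (fun s hs => hC _ (update_mem_Icc hv hs)) (left_mem_Icc.2 (hvi.1.trans hvi.2)) hvi
  simpa [Real.norm_eq_abs, abs_of_nonneg (sub_nonneg.2 hvi.1)] using hbound

theorem continuousOn_partialDeriv_of_contDiffOn {𝕜 E F : Type*} [NontriviallyNormedField 𝕜]
    [NormedAddCommGroup E] [NormedSpace 𝕜 E] [NormedAddCommGroup F] [NormedSpace 𝕜 F]
    {s : Set 𝕜} {t : Set E} (hs : UniqueDiffOn 𝕜 s) (ht : UniqueDiffOn 𝕜 t) {f f' : 𝕜 → E → F}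
    (hf : ContDiffOn 𝕜 1 (uncurry f) (s ×ˢ t))
    (hf' : ∀ y ∈ t, ∀ x ∈ s, HasDerivWithinAt (fun x' => f x' y) (f' x y) s x) :
    ContinuousOn (uncurry f') (s ×ˢ t) := by
  have hcont := (hf.continuousOn_fderivWithin (hs.prod ht) le_rfl).clm_apply
    (continuousOn_const (c := ((1, 0) : 𝕜 × E)))
  refine hcont.congr fun q hq => ?_
  have hline : HasDerivWithinAt (fun x => (x, q.2)) ((1, 0) : 𝕜 × E) s q.1 :=
    (hasDerivWithinAt_id _ _).prodMk (hasDerivWithinAt_const _ _ _)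
  have hcomp := (hf.differentiableOn one_ne_zero q hq).hasFDerivWithinAt.comp_hasDerivWithinAt
    (f := fun x => (x, q.2)) q.1 hline fun x hx => ⟨hx, hq.2⟩
  exact (hs q.1 hq.1).eq_deriv _ (hf' q.2 hq.2 q.1 hq.1) hcomp

end PartialDerivatives

section Approximation

variable {σ : Type*}

/-- Restriction of real polynomials to a set `K` of points, as a morphism into the algebra of
continuous functions on `K`. -/
noncomputable def restrictPoly (K : Set (σ → ℝ)) : MvPolynomial σ ℝ →ₐ[ℝ] C(K, ℝ) :=
  aeval fun i => ⟨fun v => v.1 i, (continuous_apply i).comp continuous_subtype_val⟩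

theorem restrictPoly_apply (K : Set (σ → ℝ)) (p : MvPolynomial σ ℝ) (v : K) :
    restrictPoly K p v = eval v.1 p := by
  induction p using MvPolynomial.induction_on with
  | C c => simp
  | add p₁ p₂ h₁ h₂ => simp [h₁, h₂]
  | mul_X p i h => simp only [map_mul, ContinuousMap.mul_apply, h]; simp [restrictPoly]

theorem separatesPoints_range_restrictPoly (K : Set (σ → ℝ)) :
    (restrictPoly K).range.SeparatesPoints := by
  intro v w hvw
  obtain ⟨i, hi⟩ : ∃ i, v.1 i ≠ w.1 i := by
    by_contra! heq
    exact hvw (Subtype.ext (funext heq))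
  exact ⟨_, ⟨restrictPoly K (X i), ⟨X i, rfl⟩, rfl⟩, by simpa [restrictPoly_apply] using hi⟩

theorem exists_mvPolynomial_near_of_continuousOn {K : Set (σ → ℝ)} (hK : IsCompact K)
    {f : (σ → ℝ) → ℝ} (hf : ContinuousOn f K) {ε : ℝ} (hε : 0 < ε) :
    ∃ p : MvPolynomial σ ℝ, ∀ v ∈ K, |eval v p - f v| < ε := by
  have : CompactSpace K := isCompact_iff_compactSpace.1 hK
  obtain ⟨⟨_, p, rfl⟩, hp⟩ :=
    ContinuousMap.exists_mem_subalgebra_near_continuous_of_separatesPoints _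
      (separatesPoints_range_restrictPoly K) (K.domRestrict f) hf.domRestrict ε hε
  exact ⟨p, fun v hv => by simpa [restrictPoly_apply] using hp ⟨v, hv⟩⟩

theorem exists_mvPolynomial_near_with_pderiv [DecidableEq σ] {a b : σ → ℝ} {i : σ}
    {f f' : (σ → ℝ) → ℝ} (hf : ContinuousOn f (Icc a b)) (hf' : ContinuousOn f' (Icc a b))
    (hderiv : ∀ v ∈ Icc a b, HasDerivWithinAt (fun s => f (update v i s)) (f' v)
      (Icc (a i) (b i)) (v i)) {ε : ℝ} (hε : 0 < ε) :
    ∃ p : MvPolynomial σ ℝ, ∀ v ∈ Icc a b,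
      |eval v p - f v| < ε ∧ |eval v (pderiv i p) - f' v| < ε := by
  obtain ⟨κ, hκ, hκε⟩ : ∃ κ > 0, κ * (1 + |b i - a i|) = ε :=
    ⟨ε / (1 + |b i - a i|), by positivity, by field_simp⟩
  obtain ⟨P, hP⟩ := exists_mvPolynomial_near_of_continuousOn isCompact_Icc hf' hκ
  obtain ⟨R, rfl⟩ := exists_pderiv_eq i P
  obtain ⟨Q, hQ⟩ := exists_mvPolynomial_near_of_continuousOn isCompact_Icc
    (hf.sub (continuous_eval R).continuousOn) hκ
  refine ⟨R + bind₁ (update X i (C (a i))) Q, fun v hv => ⟨?_, ?_⟩⟩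
  · have hface := hQ _ (update_mem_Icc hv (left_mem_Icc.2 ((hv.1 i).trans (hv.2 i))))
    have hprimitive := abs_sub_update_left_le (f := fun w => eval w R - f w)
      (fun w hw => by
        simpa using (hasDerivAt_eval_update R w i (w i)).hasDerivWithinAt.fun_sub (hderiv w hw))
      (fun w hw => (hP w hw).le) hv
    rw [map_add, eval_bind₁_update_X, ← hκε]
    set w := update v i (a i)
    calc |eval v R + eval w Q - f v|
        = |(eval w Q - (f w - eval w R)) + ((eval v R - f v) - (eval w R - f w))| := by ring_nf
      _ ≤ |eval w Q - (f w - eval w R)| + |(eval v R - f v) - (eval w R - f w)| := abs_add_le _ _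
      _ < κ + κ * |b i - a i| := add_lt_add_of_lt_of_le hface (hprimitive.trans (by
          have := (sub_le_sub_right (hv.2 i) (a i)).trans (le_abs_self _)
          gcongr))
      _ = κ * (1 + |b i - a i|) := by ring
  · rw [map_add, pderiv_bind₁_update_X, add_zero]
    exact (hP v hv).trans_le (hκε ▸ le_mul_of_one_le_right hκ.le (by simp))

end Approximation

section Interpolation

theorem mem_closure_inter_fiber {𝕜 E F : Type*} [NontriviallyNormedField 𝕜] [CompleteSpace 𝕜]
    [AddCommGroup E] [Module 𝕜 E] [TopologicalSpace E] [IsTopologicalAddGroup E]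
    [ContinuousSMul 𝕜 E] [AddCommGroup F] [Module 𝕜 F] [TopologicalSpace F]
    [IsTopologicalAddGroup F] [ContinuousSMul 𝕜 F] [T2Space F] [FiniteDimensional 𝕜 F]
    (V : Submodule 𝕜 E) (Φ : E →L[𝕜] F) {x : E} (hx : x ∈ closure (V : Set E)) :
    x ∈ closure ((V : Set E) ∩ Φ ⁻¹' {Φ x}) := by
  have hΦx : Φ x ∈ V.map (Φ : E →ₗ[𝕜] F) := by
    rw [← SetLike.mem_coe, ← (V.map (Φ : E →ₗ[𝕜] F)).closed_of_finiteDimensional.closure_eq]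
    exact map_mem_closure Φ.continuous hx fun v hv => Submodule.mem_map_of_mem hv
  obtain ⟨s, hs⟩ := ((Φ : E →ₗ[𝕜] F).submoduleMap V).exists_rightInverse_of_surjective
    (LinearMap.range_eq_top.2 ((Φ : E →ₗ[𝕜] F).submoduleMap_surjective V))
  obtain ⟨S, hS⟩ := (V.subtype ∘ₗ s).exists_extend
  have hS_mem {y : F} (hy : y ∈ V.map (Φ : E →ₗ[𝕜] F)) : S y ∈ V ∧ Φ (S y) = y := by
    have hSy : S y = s ⟨y, hy⟩ := DFunLike.congr_fun hS ⟨y, hy⟩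
    have hΦs : Φ (s ⟨y, hy⟩) = y := Subtype.ext_iff.1 (LinearMap.congr_fun hs ⟨y, hy⟩)
    exact hSy ▸ ⟨(s ⟨y, hy⟩).2, hΦs⟩
  have hr : Continuous fun v => v - S (Φ v - Φ x) := by
    have := S.continuous_of_finiteDimensional
    fun_prop
  have hmaps : MapsTo (fun v => v - S (Φ v - Φ x)) V (V ∩ Φ ⁻¹' {Φ x}) := fun v hv => by
    obtain ⟨hmem, heq⟩ := hS_mem (sub_mem (Submodule.mem_map_of_mem hv) hΦx)
    exact ⟨sub_mem hv hmem, by simp_all⟩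
  simpa using map_mem_closure hr hx hmaps

variable {σ : Type*}

/-- The pair consisting of a polynomial and its `i`-th partial derivative, restricted to `K`. The
supremum norm of such pairs is the norm in which the approximation takes place. -/
noncomputable def partialJet (K : Set (σ → ℝ)) (i : σ) :
    MvPolynomial σ ℝ →ₗ[ℝ] C(K, ℝ) × C(K, ℝ) :=
  (restrictPoly K).toLinearMap.prod ((restrictPoly K).toLinearMap ∘ₗ (pderiv i).toLinearMap)

theorem dist_partialJet_lt_iff {K : Set (σ → ℝ)} [CompactSpace K] {i : σ} {u u' : C(K, ℝ)}
    {p : MvPolynomial σ ℝ} {ε : ℝ} (hε : 0 < ε) :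
    dist (u, u') (partialJet K i p) < ε ↔
      ∀ v : K, |eval v.1 p - u v| < ε ∧ |eval v.1 (pderiv i p) - u' v| < ε := by
  simp [partialJet, Prod.dist_eq, ContinuousMap.dist_lt_iff hε, restrictPoly_apply, Real.dist_eq,
    abs_sub_comm, forall_and]

theorem exists_mvPolynomial_near_with_pderiv_eqOn {K S : Set (σ → ℝ)} (hK : IsCompact K)
    (hS : S.Finite) (hSK : S ⊆ K) {i : σ} {f f' : (σ → ℝ) → ℝ} (hf : ContinuousOn f K)
    (hf' : ContinuousOn f' K)
    (happrox : ∀ ε > 0, ∃ p : MvPolynomial σ ℝ, ∀ v ∈ K,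
      |eval v p - f v| < ε ∧ |eval v (pderiv i p) - f' v| < ε) {ε : ℝ} (hε : 0 < ε) :
    ∃ p : MvPolynomial σ ℝ,
      (∀ v ∈ K, |eval v p - f v| < ε ∧ |eval v (pderiv i p) - f' v| < ε) ∧
      EqOn (fun v => eval v p) f S := by
  have : CompactSpace K := isCompact_iff_compactSpace.1 hK
  have : Finite S := hS
  let u : C(K, ℝ) := ⟨K.domRestrict f, hf.domRestrict⟩
  let u' : C(K, ℝ) := ⟨K.domRestrict f', hf'.domRestrict⟩
  let values : C(K, ℝ) × C(K, ℝ) →L[ℝ] S → ℝ := ContinuousLinearMap.pi fun s =>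
    ContinuousMap.evalCLM ℝ (⟨s, hSK s.2⟩ : K) ∘L ContinuousLinearMap.fst ℝ _ _
  have hclosure : (u, u') ∈ closure ((partialJet K i).range : Set (C(K, ℝ) × C(K, ℝ))) :=
    Metric.mem_closure_iff.2 fun e he => by
      obtain ⟨p, hp⟩ := happrox e he
      exact ⟨_, ⟨p, rfl⟩, (dist_partialJet_lt_iff he).2 fun v => hp v v.2⟩
  obtain ⟨_, ⟨⟨p, rfl⟩, hvalues⟩, hp⟩ :=
    Metric.mem_closure_iff.1 (mem_closure_inter_fiber _ values hclosure) ε hε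
  refine ⟨p, fun v hv => (dist_partialJet_lt_iff hε).1 hp ⟨v, hv⟩, fun v hv => ?_⟩
  simpa [values, u, partialJet, restrictPoly_apply] using congr_fun hvalues ⟨v, hv⟩

end Interpolation

section PseudolineFamilies

variable {A B c d : ℝ}

theorem vec_mem_Icc_iff {x t : ℝ} :
    ![x, t] ∈ Icc ![A, c] ![B, d] ↔ x ∈ Icc A B ∧ t ∈ Icc c d := by
  simp [Pi.le_def, Fin.forall_fin_two, and_and_and_comm]

theorem continuousOn_vec_of_uncurry {f : ℝ → ℝ → ℝ}
    (hf : ContinuousOn (uncurry f) (Icc A B ×ˢ Icc c d)) :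
    ContinuousOn (fun v : Fin 2 → ℝ => f (v 0) (v 1)) (Icc ![A, c] ![B, d]) :=
  hf.comp (f := fun v : Fin 2 → ℝ => (v 0, v 1)) (by fun_prop) fun _ hv =>
    ⟨⟨hv.1 0, hv.2 0⟩, ⟨hv.1 1, hv.2 1⟩⟩

theorem exists_rectangle_mvPolynomial_near_with_partialDeriv {f fx : ℝ → ℝ → ℝ}
    (hf : ContinuousOn (uncurry f) (Icc A B ×ˢ Icc c d))
    (hfx : ContinuousOn (uncurry fx) (Icc A B ×ˢ Icc c d))
    (hderiv : ∀ t ∈ Icc c d, ∀ x ∈ Icc A B,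
      HasDerivWithinAt (fun x' => f x' t) (fx x t) (Icc A B) x)
    {S : Set (Fin 2 → ℝ)} (hS : S.Finite) (hSR : S ⊆ Icc ![A, c] ![B, d]) {ε : ℝ} (hε : 0 < ε) :
    ∃ p : MvPolynomial (Fin 2) ℝ,
      (∀ x ∈ Icc A B, ∀ t ∈ Icc c d,
        |eval ![x, t] p - f x t| < ε ∧ |eval ![x, t] (pderiv 0 p) - fx x t| < ε) ∧
      ∀ v ∈ S, eval v p = f (v 0) (v 1) := by
  have hpartial : ∀ v ∈ Icc ![A, c] ![B, d],
      HasDerivWithinAt (fun s => f (update v 0 s 0) (update v 0 s 1)) (fx (v 0) (v 1))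
        (Icc A B) (v 0) := fun v hv => by
    simpa using hderiv _ ⟨hv.1 1, hv.2 1⟩ _ ⟨hv.1 0, hv.2 0⟩
  obtain ⟨p, hp, hpS⟩ := exists_mvPolynomial_near_with_pderiv_eqOn isCompact_Icc hS hSR
    (continuousOn_vec_of_uncurry hf) (continuousOn_vec_of_uncurry hfx)
    (fun _ => exists_mvPolynomial_near_with_pderiv (continuousOn_vec_of_uncurry hf)
      (continuousOn_vec_of_uncurry hfx) hpartial) hε
  exact ⟨p, fun x hx t ht => hp _ (vec_mem_Icc_iff.2 ⟨hx, ht⟩), hpS⟩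

theorem hasDerivAt_eval_vec (p : MvPolynomial (Fin 2) ℝ) (x t : ℝ) :
    HasDerivAt (fun y => eval ![y, t] p) (eval ![x, t] (pderiv 0 p)) x := by
  have hupdate (y : ℝ) : update ![x, t] 0 y = ![y, t] :=
    Fin.update_cons_zero (α := fun _ => ℝ) x ![t] y
  simpa only [hupdate] using hasDerivAt_eval_update p ![x, t] 0 x

theorem abs_sub_sub_sub_lt {u u' v v' ε δ : ℝ} (hu : |u - u'| < ε) (hv : |v - v'| < ε)
    (hεδ : ε ≤ δ / 2) : |(u - v) - (u' - v')| < δ := by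
  calc |(u - v) - (u' - v')| = |(u - u') - (v - v')| := by ring_nf
    _ ≤ |u - u'| + |v - v'| := abs_sub _ _
    _ < δ := by linarith

theorem polynomial_approximation_of_pseudoline_family_general {ι : Type*} {I : Set ι}
    {δ η ε : ℝ} (hε : 0 < ε) (hεδ : ε ≤ δ / 2) (hεη : ε ≤ η / 2)
    {f fx : ι → ℝ → ℝ → ℝ}
    (hf : ∀ i ∈ I, ContinuousOn (uncurry (f i)) (Icc A B ×ˢ Icc c d))
    (hfx : ∀ i ∈ I, ContinuousOn (uncurry (fx i)) (Icc A B ×ˢ Icc c d))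
    (hderiv : ∀ i ∈ I, ∀ t ∈ Icc c d, ∀ x ∈ Icc A B,
      HasDerivWithinAt (fun x' => f i x' t) (fx i x t) (Icc A B) x)
    (hcross : ∀ t ∈ Icc c d, I.Pairwise fun i j => CrossesZeroTransversally A B δ η
      (fun x => f i x t - f j x t) (fun x => fx i x t - fx j x t))
    {S : Set (Fin 2 → ℝ)} (hS : S.Finite) (hSR : S ⊆ Icc ![A, c] ![B, d]) :
    ∃ p : ι → MvPolynomial (Fin 2) ℝ,
      (∀ i ∈ I, ∀ x ∈ Icc A B, ∀ t ∈ Icc c d,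
        |eval ![x, t] (p i) - f i x t| < ε ∧ |eval ![x, t] (pderiv 0 (p i)) - fx i x t| < ε) ∧
      (∀ i ∈ I, ∀ v ∈ S, eval v (p i) = f i (v 0) (v 1)) ∧
      ∀ t ∈ Icc c d, I.Pairwise fun i j =>
        ∃! x, x ∈ Icc A B ∧ eval ![x, t] (p i) = eval ![x, t] (p j) := by
  choose! p hp hpS using fun i hi => exists_rectangle_mvPolynomial_near_with_partialDeriv
    (hf i hi) (hfx i hi) (hderiv i hi) hS hSR hε
  refine ⟨p, hp, hpS, fun t ht i hi j hj hij => ?_⟩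
  simpa only [sub_eq_zero] using (hcross t ht hi hj hij).existsUnique_zero_of_near
    (fun x hx => (hderiv i hi t ht x hx).fun_sub (hderiv j hj t ht x hx))
    (fun x _ => ((hasDerivAt_eval_vec (p i) x t).fun_sub
      (hasDerivAt_eval_vec (p j) x t)).hasDerivWithinAt)
    (fun x hx => abs_sub_sub_sub_lt (hp i hi x hx t ht).1 (hp j hj x hx t ht).1 hεδ)
    (fun x hx => abs_sub_sub_sub_lt (hp i hi x hx t ht).2 (hp j hj x hx t ht).2 hεη)

end PseudolineFamilies

/-- Polynomial approximation of a quantitatively transverse family of pseudolines: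
given a `C¹` family `f_1, …, f_m : [−M,M] × [0,1] → ℝ` of graphs crossing pairwise
exactly once (with `δ`-gap sets being intervals and slope gap `η` there), with
`f_i(0,0) = 0`, and the points `x_1, …, x_n` where at least two of the `f_i(·,1)`
agree, for every `ε > 0` there are real polynomials `p_i(x,t)` approximating `f_i`
and `∂f_i/∂x` within `min(δ/3, η/3, ε)` on the domain, with `p_i(0,0) = 0`,
`p_i(x_k,1) = f_i(x_k,1)`, and such that for every `t` each pair `p_i(·,t), p_j(·,t)`
crosses exactly once in `[−M,M]`. -/
theorem polynomial_approximation_of_pseudoline_family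
    (M δ η : ℝ) (hM : 1 ≤ M) (hδ : 0 < δ) (hη : 0 < η)
    (m : ℕ) (hm : 2 ≤ m)
    (f fx : ℕ → ℝ → ℝ → ℝ)
    (hsmooth : ∀ i < m, ContDiffOn ℝ 1 (fun q : ℝ × ℝ => f i q.1 q.2)
      (Set.Icc (-M) M ×ˢ Set.Icc (0 : ℝ) 1))
    (hfx : ∀ i < m, ∀ t ∈ Set.Icc (0 : ℝ) 1, ∀ x ∈ Set.Icc (-M) M,
      HasDerivWithinAt (fun x' => f i x' t) (fx i x t) (Set.Icc (-M) M) x)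
    (hf0 : ∀ i < m, f i 0 0 = 0)
    (hcross : ∀ t ∈ Set.Icc (0 : ℝ) 1, ∀ i < m, ∀ j < m, i ≠ j →
      ∃ xbar a b, -M < a ∧ a < b ∧ b < M ∧ xbar ∈ Set.Ioo a b ∧
        f i xbar t = f j xbar t ∧
        (∀ x ∈ Set.Icc (-M) M, f i x t = f j x t → x = xbar) ∧
        {x | x ∈ Set.Icc (-M) M ∧ |f i x t - f j x t| < δ} = Set.Ioo a b)
    (hslope : ∀ t ∈ Set.Icc (0 : ℝ) 1, ∀ i < m, ∀ j < m, i ≠ j →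
      ∀ x ∈ Set.Icc (-M) M, |f i x t - f j x t| < δ → η < |fx i x t - fx j x t|)
    (n : ℕ) (X : ℕ → ℝ)
    (hX : ∀ k < n, X k ∈ Set.Icc (-M) M)
    (hXchar : ∀ x ∈ Set.Icc (-M) M,
      ((∃ i < m, ∃ j < m, i ≠ j ∧ f i x 1 = f j x 1) ↔ ∃ k < n, x = X k)) :
    ∀ ε > 0, ∃ p : ℕ → MvPolynomial (Fin 2) ℝ,
      (∀ i < m, ∀ x ∈ Set.Icc (-M) M, ∀ t ∈ Set.Icc (0 : ℝ) 1,
        |MvPolynomial.eval ![x, t] (p i) - f i x t| < min (min (δ / 3) (η / 3)) ε ∧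
        |MvPolynomial.eval ![x, t] (MvPolynomial.pderiv 0 (p i)) - fx i x t|
          < min (min (δ / 3) (η / 3)) ε) ∧
      (∀ i < m, MvPolynomial.eval ![(0 : ℝ), 0] (p i) = 0) ∧
      (∀ i < m, ∀ k < n, MvPolynomial.eval ![X k, 1] (p i) = f i (X k) 1) ∧
      (∀ t ∈ Set.Icc (0 : ℝ) 1, ∀ i < m, ∀ j < m, i ≠ j →
        ∃! x, x ∈ Set.Icc (-M) M ∧
          MvPolynomial.eval ![x, t] (p i) = MvPolynomial.eval ![x, t] (p j)) := by
  intro ε hε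
  have hfx_cont (i : ℕ) (hi : i < m) := continuousOn_partialDeriv_of_contDiffOn
    (uniqueDiffOn_Icc (by linarith)) (uniqueDiffOn_Icc one_pos) (hsmooth i hi) (hfx i hi)
  have htransverse : ∀ t ∈ Icc (0 : ℝ) 1, {i | i < m}.Pairwise fun i j =>
      CrossesZeroTransversally (-M) M δ η
        (fun x => f i x t - f j x t) (fun x => fx i x t - fx j x t) := by
    intro t ht i hi j hj hij
    obtain ⟨xbar, a, b, -, -, -, hxbar, hzero, -, hset⟩ := hcross t ht i hi j hj hij
    exact ⟨⟨xbar, (hset.symm.subset hxbar).1, sub_eq_zero.2 hzero⟩, ⟨a, b, hset⟩,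
      hslope t ht i hi j hj hij⟩
  have hS : insert ![0, 0] ((fun k => ![X k, 1]) '' Iio n) ⊆ Icc ![-M, 0] ![M, 1] := by
    rintro _ (rfl | ⟨k, hk, rfl⟩)
    · exact vec_mem_Icc_iff.2 ⟨⟨by linarith, by linarith⟩, ⟨le_rfl, zero_le_one⟩⟩
    · exact vec_mem_Icc_iff.2 ⟨hX k hk, ⟨zero_le_one, le_rfl⟩⟩
  obtain ⟨p, hp, hpS, hunique⟩ := polynomial_approximation_of_pseudoline_family_general
    (ε := min (min (δ / 3) (η / 3)) ε) (by positivity)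
    ((min_le_left _ _).trans ((min_le_left _ _).trans (by linarith)))
    ((min_le_left _ _).trans ((min_le_right _ _).trans (by linarith)))
    (fun i hi => (hsmooth i hi).continuousOn) hfx_cont hfx htransverse
    (((finite_Iio n).image _).insert _) hS
  exact ⟨p, hp, fun i hi => (hpS i hi _ (mem_insert _ _)).trans (hf0 i hi),
    fun i hi k hk => hpS i hi _ (mem_insert_of_mem _ ⟨k, hk, rfl⟩),
    fun t ht i hi j hj hij => hunique t ht hi hj hij⟩
end

section
/- Let m ≥ 3. For i = 1, …, m let a_i : ℂ → ℂ and b_i : ℂ → ℂ be analytic on a neighborhood of 0, and let c_i be analytic on a neighborhood of (0,0) in ℂ² with c_i(0, s) = 0 and ∂c_i/∂x (0, s) = 0 for all small s. For s near 0 define the curve C_i^s = { (x, y) ∈ ℂ² : y = a_i(s)·x + b_i(s) + c_i(x, s) }. Assume: the tangent slopes a₁(0), …, a_m(0) are pairwise distinct; b_i(0) = 0 for all i; b₁ ≡ 0 and b₂ ≡ 0 identically; and b_{i₀} is not identically zero for some i₀. Let r be the minimal order of vanishing at 0 among the functions b_i that are not identically zero (so 0 < r < ∞), write b_i(s) = s^r·b̄_i(s)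 with b̄_i analytic, and define the complex lines L_i = { (x, y) ∈ ℂ² : y = a_i(0)·x + b̄_i(0) }. Then: (1) the lines L₁, …, L_m are not all concurrent (L₁ and L₂ meet only at the origin, while some L_i does not pass through the origin); and (2) for every subset I ⊆ {1, …, m}, if there exist a sequence s_n → 0 with s_n ≠ 0 and points p_n ∈ ⋂_{i ∈ I} C_i^{s_n} with p_n → 0, then ⋂_{i ∈ I} L_i ≠ ∅. -/
open Filter

/-!
A remainder `c` which is `o(x)` near the origin can be written `c = φ x` with `φ → 0`. Points of the
branch `y = a(s) x + s ^ r β(s) + c(x, s)` therefore lie, after division by `s ^ r`, on the line of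
slope `a(s) + φ(x, s)` and intercept `β(s)`, and this line converges to `y = a(0) x + β(0)`. Two
lines with distinct limiting slopes meet in a point depending continuously on their coefficients, so
rescaled common points of two branches converge. The limit then lies on the limit of every other
line through the same points.
-/

section Lines

open scoped Topology

variable {K : Type*} [Field K] {α α' β β' : K}

/-- The line `y = α x + β` in the affine plane. -/
def nonverticalLine (α β : K) : Set (K × K) := {q | q.2 = α * q.1 + β}

/-- The common point of the lines `y = α x + β` and `y = α' x + β'`, given by Cramer's rule; it is
meaningful only for `α ≠ α'`. -/
def crossingPoint (α β α' β' : K) : K × K :=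
  ((β' - β) / (α - α'), α * ((β' - β) / (α - α')) + β)

lemma nonverticalLine_inter_eq_singleton (h : α ≠ α') :
    nonverticalLine α β ∩ nonverticalLine α' β' = {crossingPoint α β α' β'} := by
  have hne : α - α' ≠ 0 := sub_ne_zero.2 h
  ext ⟨x, y⟩
  simp only [nonverticalLine, crossingPoint, Set.mem_inter_iff, Set.mem_ofPred_eq,
    Set.mem_singleton_iff, Prod.mk.injEq]
  constructor
  · rintro ⟨h₁, h₂⟩
    have hx : x = (β' - β) / (α - α') := by
      rw [eq_div_iff hne]
      linear_combination h₂ - h₁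
    exact ⟨hx, hx ▸ h₁⟩
  · rintro ⟨rfl, rfl⟩
    exact ⟨rfl, by field_simp; ring⟩

lemma nonverticalLine_zero_inter_eq_singleton (h : α ≠ α') :
    nonverticalLine α 0 ∩ nonverticalLine α' 0 = {(0, 0)} := by
  simp [nonverticalLine_inter_eq_singleton h, crossingPoint]

lemma zero_mem_nonverticalLine_iff : (0, 0) ∈ nonverticalLine α β ↔ β = 0 := by
  simp [nonverticalLine, eq_comm]

lemma inv_smul_mem_nonverticalLine_iff {t : K} (ht : t ≠ 0) {q : K × K} :
    t⁻¹ • q ∈ nonverticalLine α β ↔ q ∈ nonverticalLine α (t * β) := by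
  simp only [nonverticalLine, Set.mem_ofPred_eq, Prod.smul_fst, Prod.smul_snd, smul_eq_mul]
  rw [inv_mul_eq_iff_eq_mul₀ ht, mul_add, mul_left_comm, mul_inv_cancel_left₀ ht]

variable [TopologicalSpace K] {κ ι : Type*} {l : Filter κ}

lemma mem_nonverticalLine_of_tendsto [IsTopologicalSemiring K] [T2Space K] [l.NeBot]
    {u v : κ → K} {P : κ → K × K} {z : K × K}
    (hu : Tendsto u l (𝓝 α)) (hv : Tendsto v l (𝓝 β)) (hP : Tendsto P l (𝓝 z))
    (hmem : ∀ᶠ n in l, P n ∈ nonverticalLine (u n) (v n)) : z ∈ nonverticalLine α β :=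
  tendsto_nhds_unique_of_eventuallyEq hP.snd_nhds ((hu.mul hP.fst_nhds).add hv) hmem

lemma tendsto_crossingPoint [IsTopologicalDivisionRing K] {u v u' v' : κ → K}
    (hu : Tendsto u l (𝓝 α)) (hv : Tendsto v l (𝓝 β))
    (hu' : Tendsto u' l (𝓝 α')) (hv' : Tendsto v' l (𝓝 β')) (h : α ≠ α') :
    Tendsto (fun n => crossingPoint (u n) (v n) (u' n) (v' n)) l
      (𝓝 (crossingPoint α β α' β')) := by
  have hx := (hv'.sub hv).div (hu.sub hu') (sub_ne_zero.2 h)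
  exact hx.prodMk_nhds ((hu.mul hx).add hv)

lemma tendsto_crossingPoint_of_eventually_mem [IsTopologicalDivisionRing K] [T2Space K]
    {u v u' v' : κ → K} {P : κ → K × K}
    (hu : Tendsto u l (𝓝 α)) (hv : Tendsto v l (𝓝 β))
    (hu' : Tendsto u' l (𝓝 α')) (hv' : Tendsto v' l (𝓝 β')) (h : α ≠ α')
    (hmem : ∀ᶠ n in l, P n ∈ nonverticalLine (u n) (v n))
    (hmem' : ∀ᶠ n in l, P n ∈ nonverticalLine (u' n) (v' n)) :
    Tendsto P l (𝓝 (crossingPoint α β α' β')) := by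
  refine (tendsto_crossingPoint hu hv hu' hv' h).congr' ?_
  filter_upwards [hmem, hmem', (hu.sub hu').eventually_ne (sub_ne_zero.2 h)] with n hn hn' hne
  have hPn : P n ∈ ({crossingPoint (u n) (v n) (u' n) (v' n)} : Set (K × K)) :=
    nonverticalLine_inter_eq_singleton (sub_ne_zero.1 hne) ▸ ⟨hn, hn'⟩
  exact hPn.symm

lemma exists_forall_mem_nonverticalLine_of_tendsto [IsTopologicalDivisionRing K] [T2Space K]
    [l.NeBot] {I : Set ι} {α β : ι → K} {u v : ι → κ → K} {P : κ → K × K}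
    (hα : I.InjOn α) (hu : ∀ i ∈ I, Tendsto (u i) l (𝓝 (α i)))
    (hv : ∀ i ∈ I, Tendsto (v i) l (𝓝 (β i)))
    (hmem : ∀ i ∈ I, ∀ᶠ n in l, P n ∈ nonverticalLine (u i n) (v i n)) :
    ∃ z, ∀ i ∈ I, z ∈ nonverticalLine (α i) (β i) := by
  rcases I.subsingleton_or_nontrivial with hI | ⟨i, hi, j, hj, hij⟩
  · rcases hI.eq_empty_or_singleton with rfl | ⟨i, rfl⟩
    · simp
    · exact ⟨(0, β i), by simp [nonverticalLine]⟩
  · have hP := tendsto_crossingPoint_of_eventually_mem (hu i hi) (hv i hi) (hu j hj) (hv j hj)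
      (hα.ne hi hj hij) (hmem i hi) (hmem j hj)
    exact ⟨_, fun k hk => mem_nonverticalLine_of_tendsto (hu k hk) (hv k hk) hP (hmem k hk)⟩

end Lines

section Remainder

open scoped Topology Asymptotics

lemma eq_zero_of_eventually_mul_eq_zero {X M : Type*} [TopologicalSpace X] [TopologicalSpace M]
    [T2Space M] [MulZeroClass M] [NoZeroDivisors M] {x : X} [(𝓝[≠] x).NeBot] {f g : X → M}
    (hg : ContinuousAt g x) (hf : ∀ᶠ s in 𝓝[≠] x, f s ≠ 0)
    (hfg : ∀ᶠ s in 𝓝[≠] x, f s * g s = 0) : g x = 0 := by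
  have hg₀ : g =ᶠ[𝓝[≠] x] fun _ => 0 := by
    filter_upwards [hf, hfg] with s hs hmul
    exact (mul_eq_zero.1 hmul).resolve_left hs
  exact ((hg.eventuallyEq_nhds_iff_eventuallyEq_nhdsNE continuousAt_const).1 hg₀).eq_of_nhds

variable {𝕜 E F G : Type*} [NontriviallyNormedField 𝕜]
  [NormedAddCommGroup E] [NormedSpace 𝕜 E] [NormedAddCommGroup F] [NormedSpace 𝕜 F]
  [NormedAddCommGroup G] [NormedSpace 𝕜 G]

/- Plain differentiability would only give `o(‖q - p‖)`; strictness allows the comparison of `q`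
with the moving base point `(p.1, q.2)`. -/
lemma isLittleO_sub_sub_fst_of_hasStrictFDerivAt {f : E × F → G} {f' : E × F →L[𝕜] G} {p : E × F}
    (hf : HasStrictFDerivAt f f' p) :
    (fun q => f q - f (p.1, q.2) - f' (q.1 - p.1, 0)) =o[𝓝 p] fun q => q.1 - p.1 := by
  have hpair : Tendsto (fun q : E × F => (q, (p.1, q.2))) (𝓝 p) (𝓝 (p, p)) :=
    Continuous.tendsto' (by fun_prop) _ _ rfl
  have hlittle := hf.isLittleO.comp_tendsto hpair
  simp only [Function.comp_def, Prod.sub_def, sub_self] at hlittle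
  exact hlittle.trans_isBigO (.of_norm_right (.of_bound 1 (by simp)))

lemma isLittleO_fst_of_deriv_eq_zero {f : 𝕜 × F → G} {f' : 𝕜 × F →L[𝕜] G}
    (hf : HasStrictFDerivAt f f' 0) (hzero : ∀ᶠ s in 𝓝 (0 : F), f (0, s) = 0)
    (hderiv : deriv (fun x => f (x, 0)) 0 = 0) : f =o[𝓝 0] Prod.fst := by
  have hslice : HasDerivAt (fun x : 𝕜 => f (x, 0)) (f' (1, 0)) 0 :=
    HasFDerivAt.comp_hasDerivAt (f := fun x : 𝕜 => (x, (0 : F))) 0 hf.hasFDerivAt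
      ((hasDerivAt_id 0).prodMk (hasDerivAt_const 0 0))
  have hf' (x : 𝕜) : f' (x, 0) = 0 := by
    rw [show ((x, 0) : 𝕜 × F) = x • (1, 0) by simp, map_smul, ← hslice.deriv, hderiv, smul_zero]
  refine (isLittleO_sub_sub_fst_of_hasStrictFDerivAt hf).congr' ?_ (by simp)
  filter_upwards [continuous_snd.continuousAt.eventually hzero] with q hq
  simp [hf', hq]

end Remainder

section Deformation

open scoped Topology Asymptotics

/-- The branch `C^s = {y = a(s) x + b(s) + c(x, s)}` of the deformation at parameter `s`. -/
def deformedBranch {K : Type*} [Field K] (a b : K → K) (c : K × K → K) (s : K) : Set (K × K) :=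
  {q | q.2 = a s * q.1 + b s + c (q.1, s)}

lemma inv_pow_smul_mem_nonverticalLine_of_mem_deformedBranch {K : Type*} [Field K]
    {a b : K → K} {c : K × K → K} {r : ℕ} {s β φ : K} {q : K × K} (hs : s ≠ 0)
    (hb : b s = s ^ r * β) (hc : c (q.1, s) = φ * q.1)
    (hq : q ∈ deformedBranch a b c s) :
    (s ^ r)⁻¹ • q ∈ nonverticalLine (a s + φ) β := by
  rw [inv_smul_mem_nonverticalLine_iff (pow_ne_zero r hs)]
  calc q.2 = a s * q.1 + b s + c (q.1, s) := hq
    _ = (a s + φ) * q.1 + s ^ r * β := by rw [hb, hc]; ring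

variable {𝕜 ι : Type*} [NontriviallyNormedField 𝕜] {a b β : ι → 𝕜 → 𝕜} {c : ι → 𝕜 × 𝕜 → 𝕜}
  {r : ℕ}

/- In `w = (s, x, y)` the first coordinate is the parameter; `∃ᶠ` says that common points of the
branches accumulate at the origin as `s → 0`. -/
lemma exists_forall_mem_nonverticalLine_of_frequently_mem_deformedBranch {I : Set ι}
    (ha : ∀ i ∈ I, ContinuousAt (a i) 0) (hβ : ∀ i ∈ I, ContinuousAt (β i) 0)
    (hc : ∀ i ∈ I, c i =o[𝓝 0] Prod.fst) (hslopes : I.InjOn fun i => a i 0)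
    (hfact : ∀ i ∈ I, ∀ᶠ s in 𝓝 0, b i s = s ^ r * β i s)
    (hinc : ∃ᶠ w : 𝕜 × 𝕜 × 𝕜 in 𝓝 0,
      w.1 ≠ 0 ∧ ∀ i ∈ I, w.2 ∈ deformedBranch (a i) (b i) (c i) w.1) :
    ∃ z, ∀ i ∈ I, z ∈ nonverticalLine (a i 0) (β i 0) := by
  choose! φ hφ hcφ using fun i hi => Asymptotics.isLittleO_iff_exists_eq_mul.1 (hc i hi)
  set l := 𝓝 (0 : 𝕜 × 𝕜 × 𝕜) ⊓
    𝓟 {w | w.1 ≠ 0 ∧ ∀ i ∈ I, w.2 ∈ deformedBranch (a i) (b i) (c i) w.1}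
  have : l.NeBot := frequently_iff_neBot.1 hinc
  have hl : l ≤ 𝓝 0 := inf_le_left
  have hs : Tendsto (fun w : 𝕜 × 𝕜 × 𝕜 => w.1) l (𝓝 0) :=
    (continuous_fst.tendsto 0).mono_left hl
  have hswap : Continuous fun w : 𝕜 × 𝕜 × 𝕜 => (w.2.1, w.1) := by fun_prop
  have hxs : Tendsto (fun w : 𝕜 × 𝕜 × 𝕜 => (w.2.1, w.1)) l (𝓝 0) :=
    (hswap.tendsto' 0 0 rfl).mono_left hl
  refine exists_forall_mem_nonverticalLine_of_tendsto (l := l)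
    (u := fun i w => a i w.1 + φ i (w.2.1, w.1)) (v := fun i w => β i w.1)
    (P := fun w => (w.1 ^ r)⁻¹ • w.2) hslopes (fun i hi => ?_)
    (fun i hi => (hβ i hi).tendsto.comp hs) (fun i hi => ?_)
  · simpa using ((ha i hi).tendsto.comp hs).add ((hφ i hi).comp hxs)
  · filter_upwards [hs.eventually (hfact i hi), hxs.eventually (hcφ i hi),
      mem_inf_of_right (mem_principal_self _)] with w hbw hcw hw
    exact inv_pow_smul_mem_nonverticalLine_of_mem_deformedBranch hw.1 hbw hcw (hw.2 i hi)

theorem analytic_deformation_limit_lines_general {J : Set ι} {i₀ i₁ : ι}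
    (hi₀ : i₀ ∈ J) (hi₁ : i₁ ∈ J) (hne : i₀ ≠ i₁)
    (ha : ∀ i ∈ J, ContinuousAt (a i) 0) (hβ : ∀ i ∈ J, ContinuousAt (β i) 0)
    (hc : ∀ i ∈ J, c i =o[𝓝 0] Prod.fst) (hslopes : J.InjOn fun i => a i 0)
    (hb₀ : ∀ᶠ s in 𝓝 0, b i₀ s = 0) (hb₁ : ∀ᶠ s in 𝓝 0, b i₁ s = 0)
    (hfact : ∀ i ∈ J, ∀ᶠ s in 𝓝 0, b i s = s ^ r * β i s) (hminimal : ∃ i ∈ J, β i 0 ≠ 0) :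
    nonverticalLine (a i₀ 0) (β i₀ 0) ∩ nonverticalLine (a i₁ 0) (β i₁ 0) = {(0, 0)} ∧
    (∃ i ∈ J, (0, 0) ∉ nonverticalLine (a i 0) (β i 0)) ∧
    (¬ ∃ z, ∀ i ∈ J, z ∈ nonverticalLine (a i 0) (β i 0)) ∧
    ∀ I ⊆ J,
      (∃ᶠ w : 𝕜 × 𝕜 × 𝕜 in 𝓝 0,
        w.1 ≠ 0 ∧ ∀ i ∈ I, w.2 ∈ deformedBranch (a i) (b i) (c i) w.1) →
      ∃ z, ∀ i ∈ I, z ∈ nonverticalLine (a i 0) (β i 0) := by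
  have hβ_zero {i : ι} (hi : i ∈ J) (hb : ∀ᶠ s in 𝓝 0, b i s = 0) : β i 0 = 0 := by
    refine eq_zero_of_eventually_mul_eq_zero (hβ i hi) (f := (· ^ r))
      (eventually_mem_nhdsWithin.mono fun s hs => pow_ne_zero r hs)
      (.filter_mono nhdsWithin_le_nhds ?_)
    filter_upwards [hb, hfact i hi] with s hbs hfs using hfs ▸ hbs
  have hinter :
      nonverticalLine (a i₀ 0) (β i₀ 0) ∩ nonverticalLine (a i₁ 0) (β i₁ 0) = {(0, 0)} := by
    rw [hβ_zero hi₀ hb₀, hβ_zero hi₁ hb₁]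
    exact nonverticalLine_zero_inter_eq_singleton (hslopes.ne hi₀ hi₁ hne)
  obtain ⟨k, hk, hβk⟩ := hminimal
  have hmiss : (0, 0) ∉ nonverticalLine (a k 0) (β k 0) := zero_mem_nonverticalLine_iff.not.2 hβk
  refine ⟨hinter, ⟨k, hk, hmiss⟩, ?_, fun I hI => ?_⟩
  · rintro ⟨z, hz⟩
    obtain rfl : z = (0, 0) := hinter.subset ⟨hz i₀ hi₀, hz i₁ hi₁⟩
    exact hmiss (hz k hk)
  · exact exists_forall_mem_nonverticalLine_of_frequently_mem_deformedBranch
      (fun i hi => ha i (hI hi)) (fun i hi => hβ i (hI hi)) (fun i hi => hc i (hI hi))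
      (hslopes.mono hI) (fun i hi => hfact i (hI hi))

end Deformation

/-- De Jong–van Straten degeneration lemma (analytic case): an analytic δ-constant
deformation `C_i^s = {y = a_i(s)x + b_i(s) + c_i(x,s)}` of a plane curve germ with
smooth branches having pairwise distinct tangents, normalized so that the first two
branches always pass through the origin and not all deformed branches are concurrent
(encoded by `b_i(s) = s^r b̄_i(s)` with `r ≥ 1` minimal, i.e. `b̄_{i₀}(0) ≠ 0` for
some `i₀`), limits after rescaling to the complex lines
`L_i = {y = a_i(0)x + b̄_i(0)}`; these lines are not all concurrent (`L₁ ∩ L₂` is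
exactly the origin and some `L_i` misses the origin), and they satisfy every
incidence relation persisting along the deformation. Branch `i+1` of the paper is
indexed here by `i < m`. -/
theorem analytic_deformation_limit_lines
    (m : ℕ) (hm : 3 ≤ m)
    (a b bbar : ℕ → ℂ → ℂ) (c : ℕ → ℂ × ℂ → ℂ)
    (ha : ∀ i < m, AnalyticAt ℂ (a i) 0)
    (hb : ∀ i < m, AnalyticAt ℂ (b i) 0)
    (hbbar : ∀ i < m, AnalyticAt ℂ (bbar i) 0)
    (hc : ∀ i < m, AnalyticAt ℂ (c i) (0 : ℂ × ℂ))
    (hcvanish : ∀ i < m, ∀ᶠ s in nhds (0 : ℂ),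
      c i (0, s) = 0 ∧ deriv (fun x => c i (x, s)) 0 = 0)
    (hslopes : ∀ i < m, ∀ j < m, i ≠ j → a i 0 ≠ a j 0)
    (hb0 : ∀ i < m, b i 0 = 0)
    (hbfirst : ∀ᶠ s in nhds (0 : ℂ), b 0 s = 0)
    (hbsecond : ∀ᶠ s in nhds (0 : ℂ), b 1 s = 0)
    (hbnonzero : ∃ i₀ < m, ¬ (∀ᶠ s in nhds (0 : ℂ), b i₀ s = 0))
    (r : ℕ) (hr : 0 < r)
    (hfact : ∀ i < m, ∀ᶠ s in nhds (0 : ℂ), b i s = s ^ r * bbar i s)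
    (hminimal : ∃ i₀ < m, bbar i₀ 0 ≠ 0)
    (C : ℕ → ℂ → Set (ℂ × ℂ))
    (hC : ∀ i s, C i s = {q : ℂ × ℂ | q.2 = a i s * q.1 + b i s + c i (q.1, s)})
    (L : ℕ → Set (ℂ × ℂ))
    (hL : ∀ i, L i = {q : ℂ × ℂ | q.2 = a i 0 * q.1 + bbar i 0}) :
    (L 0 ∩ L 1 = {((0 : ℂ), (0 : ℂ))}) ∧
    (∃ i < m, ((0 : ℂ), (0 : ℂ)) ∉ L i) ∧
    (¬ ∃ z : ℂ × ℂ, ∀ i < m, z ∈ L i) ∧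
    (∀ I : Finset ℕ, I ⊆ Finset.range m →
      (∃ (s : ℕ → ℂ) (p : ℕ → ℂ × ℂ),
        Tendsto s atTop (nhds 0) ∧ (∀ n, s n ≠ 0) ∧
        Tendsto p atTop (nhds 0) ∧ (∀ n, ∀ i ∈ I, p n ∈ C i (s n))) →
      ∃ z : ℂ × ℂ, ∀ i ∈ I, z ∈ L i) := by
  obtain rfl : C = fun i => deformedBranch (a i) (b i) (c i) := funext₂ hC
  obtain rfl : L = fun i => nonverticalLine (a i 0) (bbar i 0) := funext hL
  obtain ⟨hinter, hmiss, hconc, hinc⟩ := analytic_deformation_limit_lines_general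
    (J := Set.Iio m) (show 0 < m by omega) (show 1 < m by omega) zero_ne_one
    (fun i hi => (ha i hi).continuousAt) (fun i hi => (hbbar i hi).continuousAt)
    (fun i hi => isLittleO_fst_of_deriv_eq_zero (hc i hi).hasStrictFDerivAt
      ((hcvanish i hi).mono fun _ h => h.1) (hcvanish i hi).self_of_nhds.2)
    (fun i hi j hj => not_imp_not.1 (hslopes i hi j hj)) hbfirst hbsecond hfact hminimal
  refine ⟨hinter, hmiss, hconc, fun I hI ⟨s, p, hs, hs₀, hp, hmem⟩ => ?_⟩
  exact hinc I (fun i hi => Finset.mem_range.1 (hI hi))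
    ((hs.prodMk_nhds hp).frequently (Frequently.of_forall fun n => ⟨hs₀ n, hmem n⟩))
end

section
/- Let m ≥ 3. For i = 1, …, m let f_i : ℂ × ℝ → ℂ be smooth functions of (x₁, x₂, t) (where x = x₁ + i·x₂), and for t ∈ [0, 1] define the curve C_i^t = { (x, y) ∈ ℂ² : y = f_i(x, t) }. Assume: f_i(0, 0) = 0 for all i; the real differential of x ↦ f_i(x, 0) at x = 0 is complex linear, given by multiplication by a_i ∈ ℂ, with a₁, …, a_m pairwise distinct; f₁(0, t) = 0 and f₂(0, t) = 0 for all t; and, setting b_i(t) = f_i(0, t), there exist an index k and an integer r ≥ 1 with dʳb_k/dtʳ (0) ≠ 0. Let r be minimal with this property over all indices, define β_i = (1/r!)·dʳb_i/dtʳ (0), and define the complex lines L_i = { (x, y) ∈ ℂ² : y = a_i·x + β_i }. Then: (1) the lines L₁, …, L_m are not all concurrent; and (2) for every subset I ⊆ {1, …, m}, if there exist a sequence t_n → 0 with t_n > 0 and points p_n ∈ ⋂_{i ∈ I} C_i^{t_n} with p_n → 0, then ⋂_{i ∈ I} L_i ≠ ∅. -/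
/-!
Put `x = t ^ r • x'` and `y = t ^ r • y'`. To first order at the origin the branch `y = F i (x, t)`
is `y = A i x + t ^ r • β i + o(‖x‖ + |t| ^ r)`, so in the rescaled coordinates it converges to
the affine graph `y' = A i x' + β i` on bounded sets. Rescaled incidence points might still escape
to infinity; they do not, because on two branches `i`, `j` subtracting the equations and inverting
`A i - A j` gives `x' = u + o(‖x'‖ + 1)`, where `u` is the abscissa at which the two limit graphs
meet. Hence `(x', y')` converges, and its limit lies on every limit graph involved.
-/

open Filter Topology Asymptotics

section Asymptotics

theorem isBigO_smul_const {α 𝕜 E : Type*} [NormedField 𝕜] [SeminormedAddCommGroup E]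
    [NormedSpace 𝕜 E] (s : α → 𝕜) (v : E) (l : Filter α) : (fun n => s n • v) =O[l] s :=
  .of_bound ‖v‖ <| .of_forall fun n => by rw [norm_smul, mul_comm]

theorem isLittleO_sub_of_isLittleO_prodMk {α E S : Type*} [SeminormedAddCommGroup E]
    [SeminormedAddCommGroup S] {l : Filter α} {x g : α → E} {s : α → S}
    (h : (fun n => x n - g n) =o[l] fun n => (x n, s n)) (hg : g =O[l] s) :
    (fun n => x n - g n) =o[l] s := by
  have hdiff : (fun n => (x n, s n) - (g n, s n)) =o[l] fun n => (x n, s n) := by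
    simpa using h.prod_left (isLittleO_zero (fun n => (x n, s n)) l : (fun _ => (0 : S)) =o[l] _)
  have hbig : (fun n => (x n, s n)) =O[l] fun n => (g n, s n) := by
    simpa only [sub_sub_cancel] using hdiff.right_isBigO_sub
  exact h.trans_isBigO (hbig.trans (hg.prod_left (isBigO_refl s l)))

theorem eq_of_isLittleO_sub_smul {α 𝕜 E : Type*} [NormedField 𝕜] [NormedAddCommGroup E]
    [NormedSpace 𝕜 E] {l : Filter α} {s : α → 𝕜} {y : α → E} {v w : E} (hs : ∃ᶠ n in l, s n ≠ 0)
    (hv : (fun n => y n - s n • v) =o[l] s) (hw : (fun n => y n - s n • w) =o[l] s) :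
    v = w := by
  by_contra hvw
  have hsub : (fun n => s n • (v - w)) =o[l] s :=
    (hw.sub hv).congr_left fun n => by rw [smul_sub]; abel
  have hbig : s =O[l] fun n => s n • (v - w) :=
    .of_bound ‖v - w‖⁻¹ <| .of_forall fun n => by
      rw [norm_smul, mul_comm ‖s n‖, inv_mul_cancel_left₀ (norm_ne_zero_iff.2 (sub_ne_zero.2 hvw))]
  exact hbig.not_isLittleO hs hsub

end Asymptotics

section AffineGraphs

theorem isInvertible_mul_sub_mul (𝕜 : Type*) {K : Type*} [NontriviallyNormedField 𝕜]
    [NormedDivisionRing K] [NormedAlgebra 𝕜 K] {a b : K} (hab : a ≠ b) :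
    (ContinuousLinearMap.mul 𝕜 K a - ContinuousLinearMap.mul 𝕜 K b).IsInvertible := by
  have hne : a - b ≠ 0 := sub_ne_zero.2 hab
  rw [← map_sub]
  refine .of_inverse (g := .mul 𝕜 K (a - b)⁻¹) ?_ ?_ <;> ext v <;> simp [-map_sub, hne]

theorem not_exists_common_point_of_injective_sub {ι E G 𝓕 : Type*} [Zero E] [AddGroup G]
    [FunLike 𝓕 E G] [ZeroHomClass 𝓕 E G] {S : Set ι} {A : ι → 𝓕} {β : ι → G} {i j k : ι}
    (hi : i ∈ S) (hj : j ∈ S) (hk : k ∈ S) (hinj : Function.Injective fun x => A i x - A j x)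
    (hβi : β i = 0) (hβj : β j = 0) (hβk : β k ≠ 0) :
    ¬ ∃ z : E × G, ∀ i ∈ S, z.2 = A i z.1 + β i := by
  rintro ⟨⟨x, y⟩, hz⟩
  have hyi : y = A i x := by simpa [hβi] using hz i hi
  have hyj : y = A j x := by simpa [hβj] using hz j hj
  have hx : x = 0 := hinj (by simp [← hyi, ← hyj])
  exact hβk (by simpa [hyi, hx] using (hz k hk).symm)

variable {α 𝕜 E G : Type*} [NontriviallyNormedField 𝕜] [NormedAddCommGroup E] [NormedSpace 𝕜 E]
  [NormedAddCommGroup G] [NormedSpace 𝕜 G] {l : Filter α} {x : α → E} {y : α → G} {s : α → 𝕜}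

theorem isLittleO_sub_smul_of_isLittleO_affine {A B : E →L[𝕜] G} {b c : G} {u : E}
    (hAB : (A - B).IsInvertible) (hu : A u + b = B u + c)
    (hA : (fun n => y n - (A (x n) + s n • b)) =o[l] fun n => (x n, s n))
    (hB : (fun n => y n - (B (x n) + s n • c)) =o[l] fun n => (x n, s n)) :
    (fun n => x n - s n • u) =o[l] s := by
  obtain ⟨e, he⟩ := hAB
  have he_apply (v : E) : e v = A v - B v := by simpa using congr($he v)
  have hc : c = (A u - B u) + b := by rw [sub_add_eq_add_sub, hu, add_sub_cancel_left]
  have hdiff : (fun n => e (x n - s n • u)) =o[l] fun n => (x n, s n) := by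
    refine (hB.sub hA).congr_left fun n => ?_
    simp only [he_apply, map_sub, map_smul, hc, smul_add, smul_sub]
    abel
  have hprod : (fun n => x n - s n • u) =o[l] fun n => (x n, s n) :=
    (e.isBigO_comp_rev _ l).trans_isLittleO hdiff
  exact isLittleO_sub_of_isLittleO_prodMk hprod (isBigO_smul_const s u l)

theorem isLittleO_sub_smul_apply_of_isLittleO_affine {A : E →L[𝕜] G} {b : G} {u : E}
    (hx : (fun n => x n - s n • u) =o[l] s)
    (hA : (fun n => y n - (A (x n) + s n • b)) =o[l] fun n => (x n, s n)) :
    (fun n => y n - s n • (A u + b)) =o[l] s := by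
  have hxs : x =O[l] s :=
    (hx.isBigO.add (isBigO_smul_const s u l)).congr_left fun n => sub_add_cancel _ _
  refine ((hA.trans_isBigO (hxs.prod_left (isBigO_refl s l))).add
    ((A.isBigO_comp _ l).trans_isLittleO hx)).congr_left fun n => ?_
  simp only [map_sub, map_smul, smul_add]
  abel

theorem exists_common_point_of_isLittleO_affine {ι : Type*} {I : Set ι} {A : ι → E →L[𝕜] G}
    {β : ι → G} (hinv : I.Pairwise fun i j => (A i - A j).IsInvertible) (hs : ∃ᶠ n in l, s n ≠ 0)
    (h : ∀ i ∈ I, (fun n => y n - (A i (x n) + s n • β i)) =o[l] fun n => (x n, s n)) :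
    ∃ z : E × G, ∀ i ∈ I, z.2 = A i z.1 + β i := by
  rcases I.subsingleton_or_nontrivial with hI | ⟨i, hi, j, hj, hij⟩
  · rcases hI.eq_empty_or_singleton with rfl | ⟨i, rfl⟩
    · exact ⟨0, by simp⟩
    · exact ⟨(0, β i), by simp⟩
  obtain ⟨u, hu⟩ : ∃ u, A i u + β i = A j u + β j := by
    obtain ⟨u, hu⟩ := (hinv hi hj hij).bijective.surjective (β j - β i)
    rw [sub_apply, sub_eq_sub_iff_add_eq_add] at hu
    exact ⟨u, by rw [hu, add_comm]⟩
  have hx := isLittleO_sub_smul_of_isLittleO_affine (hinv hi hj hij) hu (h i hi) (h j hj)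
  exact ⟨(u, A i u + β i), fun k hk => eq_of_isLittleO_sub_smul hs
    (isLittleO_sub_smul_apply_of_isLittleO_affine hx (h i hi))
    (isLittleO_sub_smul_apply_of_isLittleO_affine hx (h k hk))⟩

end AffineGraphs

section Expansion

theorem isLittleO_sub_sub_fderiv_fst {𝕜 E T G : Type*} [NontriviallyNormedField 𝕜]
    [NormedAddCommGroup E] [NormedSpace 𝕜 E] [NormedAddCommGroup T] [NormedSpace 𝕜 T]
    [NormedAddCommGroup G] [NormedSpace 𝕜 G] {F : E × T → G} {x₀ : E} {t₀ : T}
    {F' : E × T →L[𝕜] G} (hF : HasStrictFDerivAt F F' (x₀, t₀)) :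
    (fun q : E × T => F q - F (x₀, q.2) - fderiv 𝕜 (fun x => F (x, t₀)) x₀ (q.1 - x₀))
      =o[𝓝 (x₀, t₀)] fun q => q.1 - x₀ := by
  have hpartial : fderiv 𝕜 (fun x => F (x, t₀)) x₀ = F'.comp (.inl 𝕜 E T) :=
    (hF.hasFDerivAt.comp x₀ (hasFDerivAt_prodMk_left x₀ t₀)).fderiv
  have hproj : Tendsto (fun q : E × T => (q, (x₀, q.2))) (𝓝 (x₀, t₀))
      (𝓝 ((x₀, t₀), (x₀, t₀))) :=
    Continuous.tendsto' (by fun_prop) _ _ rfl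
  have hsub (q : E × T) : q - (x₀, q.2) = (q.1 - x₀, 0) := by ext <;> simp
  refine ((hF.isLittleO.comp_tendsto hproj).congr_left fun q => ?_).trans_isBigO
    (isBigO_of_le _ fun q => ?_)
  · simp only [Function.comp_apply, hsub, hpartial, ContinuousLinearMap.comp_apply,
      ContinuousLinearMap.inl_apply]
  · simp [hsub]

variable {G : Type*} [NormedAddCommGroup G] [NormedSpace ℝ G] {r : ℕ}

theorem isLittleO_sub_leading_term {b : ℝ → G} {t₀ : ℝ} (hb : ContDiffAt ℝ r b t₀)
    (h : ∀ j < r, iteratedDeriv j b t₀ = 0) :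
    (fun t => b t - (t - t₀) ^ r • (r.factorial : ℝ)⁻¹ • iteratedDeriv r b t₀)
      =o[𝓝 t₀] fun t => (t - t₀) ^ r := by
  obtain ⟨ε, hε, hball⟩ := Metric.eventually_nhds_iff_ball.1 (hb.eventually (by simp))
  have ht₀ := Metric.mem_ball_self (x := t₀) hε
  have hbε : ContDiffOn ℝ r b (Metric.ball t₀ ε) := fun t ht => (hball t ht).contDiffWithinAt
  have hderiv (j : ℕ) : iteratedDerivWithin j b (Metric.ball t₀ ε) t₀ = iteratedDeriv j b t₀ :=
    iteratedDerivWithin_of_isOpen Metric.isOpen_ball ht₀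
  have htaylor (t : ℝ) : taylorWithinEval b r (Metric.ball t₀ ε) t₀ t =
      (t - t₀) ^ r • (r.factorial : ℝ)⁻¹ • iteratedDeriv r b t₀ := by
    rw [taylor_within_apply, Finset.sum_range_succ, Finset.sum_eq_zero, zero_add, hderiv,
      mul_comm, mul_smul]
    intro j hj
    rw [hderiv, h j (Finset.mem_range.1 hj), smul_zero]
  simpa only [htaylor, Metric.isOpen_ball.nhdsWithin_eq ht₀] using
    taylor_isLittleO (convex_ball t₀ ε) ht₀ hbε

theorem isLittleO_sub_fderiv_add_leading_term {E : Type*} [NormedAddCommGroup E] [NormedSpace ℝ E]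
    {F : E × ℝ → G} (hr : r ≠ 0) (hF : ContDiffAt ℝ r F 0)
    (h : ∀ j < r, iteratedDeriv j (fun t => F (0, t)) 0 = 0) :
    (fun q : E × ℝ => F q - (fderiv ℝ (fun x => F (x, 0)) 0 q.1 +
        q.2 ^ r • (r.factorial : ℝ)⁻¹ • iteratedDeriv r (fun t => F (0, t)) 0))
      =o[𝓝 0] fun q => (q.1, q.2 ^ r) := by
  have hx := isLittleO_sub_sub_fderiv_fst (x₀ := 0) (t₀ := 0)
    (hF.hasStrictFDerivAt (by simpa using hr))
  have hb : ContDiffAt ℝ r (fun t : ℝ => F (0, t)) 0 :=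
    ContDiffAt.comp (g := F) (0 : ℝ) hF (contDiffAt_const.prodMk contDiffAt_id)
  have ht := (isLittleO_sub_leading_term hb h).comp_tendsto
    (continuous_snd.tendsto' (0 : E × ℝ) 0 rfl)
  simp only [sub_zero, Function.comp_def] at hx ht
  refine ((hx.trans_isBigO isBigO_fst_prod).add (ht.trans_isBigO isBigO_snd_prod)).congr_left
    fun q => ?_
  abel

end Expansion

section Deformations

variable {ι E G : Type*} [NormedAddCommGroup E] [NormedSpace ℝ E] [NormedAddCommGroup G]
  [NormedSpace ℝ G] {F : ι → E × ℝ → G} {A : ι → E →L[ℝ] G} {β : ι → G} {r : ℕ}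

theorem exists_common_point_of_frequently_common_point {I : Set ι} (hr : r ≠ 0)
    (hF : ∀ i ∈ I, ContDiffAt ℝ r (F i) 0)
    (hA : ∀ i ∈ I, fderiv ℝ (fun x => F i (x, 0)) 0 = A i)
    (hinv : I.Pairwise fun i j => (A i - A j).IsInvertible)
    (hvanish : ∀ i ∈ I, ∀ j < r, iteratedDeriv j (fun t => F i (0, t)) 0 = 0)
    (hβ : ∀ i ∈ I, β i = (r.factorial : ℝ)⁻¹ • iteratedDeriv r (fun t => F i (0, t)) 0)
    (hI : ∃ᶠ q : ℝ × E × G in 𝓝[≠] 0 ×ˢ 𝓝 0, ∀ i ∈ I, q.2.2 = F i (q.2.1, q.1)) :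
    ∃ z : E × G, ∀ i ∈ I, z.2 = A i z.1 + β i := by
  set l : Filter (ℝ × E × G) := 𝓝[≠] 0 ×ˢ 𝓝 0
  set incident : Set (ℝ × E × G) := {q | ∀ i ∈ I, q.2.2 = F i (q.2.1, q.1)}
  have : (l ⊓ 𝓟 incident).NeBot := frequently_mem_iff_neBot.1 hI
  have ht : Tendsto (fun q : ℝ × E × G => q.1) l (𝓝[≠] 0) := tendsto_fst
  have hx : Tendsto (fun q : ℝ × E × G => q.2.1) l (𝓝 0) :=
    (continuous_fst.tendsto' 0 0 rfl).comp tendsto_snd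
  have hxt : Tendsto (fun q : ℝ × E × G => (q.2.1, q.1)) (l ⊓ 𝓟 incident) (𝓝 0) :=
    (hx.prodMk_nhds (tendsto_nhds_of_tendsto_nhdsWithin ht)).mono_left inf_le_left
  have hne : ∀ᶠ q in l ⊓ 𝓟 incident, q.1 ^ r ≠ 0 :=
    ((tendsto_nhdsWithin_iff.1 ht).2.filter_mono inf_le_left).mono fun q hq => pow_ne_zero r hq
  refine exists_common_point_of_isLittleO_affine (l := l ⊓ 𝓟 incident) (x := fun q => q.2.1)
    (y := fun q => q.2.2) (s := fun q => q.1 ^ r) hinv hne.frequently fun i hi => ?_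
  refine ((isLittleO_sub_fderiv_add_leading_term hr (hF i hi) (hvanish i hi)).comp_tendsto
    hxt).congr' ?_ .rfl
  filter_upwards [mem_inf_of_right (mem_principal_self incident)] with q hq
  simp only [Function.comp_apply, hq i hi, hA i hi, hβ i hi]

theorem smooth_deformation_limit_lines_general {S : Set ι} (hr : r ≠ 0)
    (hF : ∀ i ∈ S, ContDiffAt ℝ r (F i) 0)
    (hA : ∀ i ∈ S, fderiv ℝ (fun x => F i (x, 0)) 0 = A i)
    (hinv : S.Pairwise fun i j => (A i - A j).IsInvertible)
    {i₀ i₁ : ι} (hi₀ : i₀ ∈ S) (hi₁ : i₁ ∈ S) (hne : i₀ ≠ i₁)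
    (hfirst : iteratedDeriv r (fun t => F i₀ (0, t)) 0 = 0)
    (hsecond : iteratedDeriv r (fun t => F i₁ (0, t)) 0 = 0)
    (hrex : ∃ k ∈ S, iteratedDeriv r (fun t => F k (0, t)) 0 ≠ 0)
    (hvanish : ∀ i ∈ S, ∀ j < r, iteratedDeriv j (fun t => F i (0, t)) 0 = 0)
    (hβ : ∀ i ∈ S, β i = (r.factorial : ℝ)⁻¹ • iteratedDeriv r (fun t => F i (0, t)) 0) :
    (¬ ∃ z : E × G, ∀ i ∈ S, z.2 = A i z.1 + β i) ∧
    ∀ I ⊆ S, (∃ᶠ q : ℝ × E × G in 𝓝[≠] 0 ×ˢ 𝓝 0, ∀ i ∈ I, q.2.2 = F i (q.2.1, q.1)) →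
      ∃ z : E × G, ∀ i ∈ I, z.2 = A i z.1 + β i := by
  refine ⟨?_, fun I hIS => exists_common_point_of_frequently_common_point hr
    (fun i hi => hF i (hIS hi)) (fun i hi => hA i (hIS hi)) (hinv.mono hIS)
    (fun i hi => hvanish i (hIS hi)) fun i hi => hβ i (hIS hi)⟩
  obtain ⟨k, hk, hbk⟩ := hrex
  have hβk : β k ≠ 0 := by
    rw [hβ k hk]
    exact smul_ne_zero (inv_ne_zero (Nat.cast_ne_zero.2 r.factorial_ne_zero)) hbk
  exact not_exists_common_point_of_injective_sub hi₀ hi₁ hk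
    (hinv hi₀ hi₁ hne).bijective.injective (by rw [hβ i₀ hi₀, hfirst, smul_zero])
    (by rw [hβ i₁ hi₁, hsecond, smul_zero]) hβk

end Deformations

/-- Smooth ("small smooth deformation") version of the degeneration lemma: a smooth
graphical homotopy `C_i^t = {y = f_i(x, t)}` of the branches of a plane curve germ
with smooth branches whose complex tangents (multiplication by `a_i`) are pairwise
distinct, normalized so the first two branches always pass through the origin, and
satisfying the infinitesimal non-concurrence condition that some `b_k(t) = f_k(0,t)`
has a nonvanishing `t`-derivative of some order `r ≥ 1` at `0` (with `r` minimal over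
all indices), limits after rescaling to the complex lines `L_i = {y = a_i x + β_i}`
with `β_i = (1/r!)·dʳb_i/dtʳ(0)`; these lines are not all concurrent and satisfy
every incidence relation persisting along the homotopy. Branch `i+1` of the paper is
indexed here by `i < m`. -/
theorem smooth_deformation_limit_lines
    (m : ℕ) (hm : 3 ≤ m)
    (f : ℕ → ℂ → ℝ → ℂ)
    (hsmooth : ∀ i < m, ContDiff ℝ (⊤ : ℕ∞) (fun q : ℂ × ℝ => f i q.1 q.2))
    (hf00 : ∀ i < m, f i 0 0 = 0)
    (a : ℕ → ℂ)
    (hdiff : ∀ i < m, ∀ v : ℂ, fderiv ℝ (fun x => f i x 0) 0 v = a i * v)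
    (hslopes : ∀ i < m, ∀ j < m, i ≠ j → a i ≠ a j)
    (hfirst : ∀ t : ℝ, f 0 0 t = 0)
    (hsecond : ∀ t : ℝ, f 1 0 t = 0)
    (r : ℕ) (hr : 1 ≤ r)
    (hrex : ∃ k < m, iteratedDeriv r (fun t => f k 0 t) 0 ≠ 0)
    (hrmin : ∀ j, 1 ≤ j → j < r → ∀ k < m, iteratedDeriv j (fun t => f k 0 t) 0 = 0)
    (β : ℕ → ℂ)
    (hβ : ∀ i < m, β i = (r.factorial : ℂ)⁻¹ * iteratedDeriv r (fun t => f i 0 t) 0)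
    (C : ℕ → ℝ → Set (ℂ × ℂ))
    (hC : ∀ i t, C i t = {q : ℂ × ℂ | q.2 = f i q.1 t})
    (L : ℕ → Set (ℂ × ℂ))
    (hL : ∀ i, L i = {q : ℂ × ℂ | q.2 = a i * q.1 + β i}) :
    (¬ ∃ z : ℂ × ℂ, ∀ i < m, z ∈ L i) ∧
    (∀ I : Finset ℕ, I ⊆ Finset.range m →
      (∃ (t : ℕ → ℝ) (p : ℕ → ℂ × ℂ),
        Filter.Tendsto t Filter.atTop (nhds 0) ∧ (∀ n, 0 < t n) ∧
        Filter.Tendsto p Filter.atTop (nhds 0) ∧ (∀ n, ∀ i ∈ I, p n ∈ C i (t n))) →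
      ∃ z : ℂ × ℂ, ∀ i ∈ I, z ∈ L i) := by
  obtain ⟨hconc, hinc⟩ := smooth_deformation_limit_lines_general (S := Set.Iio m)
    (F := fun i q => f i q.1 q.2) (A := fun i => .mul ℝ ℂ (a i)) (β := β) (i₀ := 0) (i₁ := 1)
    (by omega) (fun i hi => (hsmooth i hi).contDiffAt.of_le (by exact_mod_cast le_top))
    (fun i hi => ContinuousLinearMap.ext (hdiff i hi))
    (fun i hi j hj hij => isInvertible_mul_sub_mul ℝ (hslopes i hi j hj hij))
    (by grind) (by grind) zero_ne_one (by simp [hfirst]) (by simp [hsecond]) hrex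
    (fun i hi j hj => j.eq_zero_or_pos.elim (by rintro rfl; simpa using hf00 i hi)
      fun hpos => hrmin j hpos hj i hi)
    (fun i hi => by simpa using hβ i hi)
  simp only [hC, hL]
  refine ⟨hconc, fun I hI ⟨t, p, ht, htpos, hp, hmem⟩ => hinc I (by grind) ?_⟩
  exact ((tendsto_nhdsWithin_iff.2 ⟨ht, .of_forall fun n => (htpos n).ne'⟩).prodMk hp).frequently
    (.of_forall hmem)
end
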